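/- arXiv:1610.02566 — 3 statements merged into one kernel-verified Lean document; each statement's English description precedes it below -/
import Mathlib

section
/- Let s and N be positive integers with s dividing N, set Q = N/s, let U_s ∈ ℂ^{N×s} consist of the first s columns of the N×N DFT matrix F^N, and fix t_d ∈ {0,…,Q−1}. Let c_1,…,c_s be real numbers and let D be the N×N diagonal matrix whose (Q(k−1)+t_d+1)-th diagonal entry equals c_k for k = 1,…,s, with all other diagonal entries zero. Then U_s† D U_s is unitarily similar to (s/N)·diag(c_1,…,c_s); in particular, the multiset of eigenvalues of U_s† D U_s equals {(s/N)·c_k : k = 1,…,s}. -/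
open Matrix Finset

/-- The `n×n` DFT matrix, `[F^n]_{tk} = (1/√n)·exp(−j·(2π/n)·(t−1)(k−1))` (0-based indices). -/
noncomputable def dftMatrix (n : ℕ) : Matrix (Fin n) (Fin n) ℂ :=
  Matrix.of fun t k =>
    (1 / (Real.sqrt n : ℂ)) *
      Complex.exp (-Complex.I * ((2 * Real.pi / n : ℝ) : ℂ) * (t.1 : ℂ) * (k.1 : ℂ))

/-- The (0-based) index `Q·k + t_d` inside `Fin (s·Q)` (the `(Q(k−1)+t_d+1)`-th position,
1-based). -/
def posIdx (s Q : ℕ) (td : Fin Q) (k : Fin s) : Fin (s * Q) := finProdFinEquiv (k, td)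

lemma aux_entry (s Q : ℕ) (hs : 0 < s) (hQ : 0 < Q) (td : Fin Q) (k : Fin s) (a : Fin (s * Q)) :
    dftMatrix (s * Q) (posIdx s Q td k) a =
      (1 / (Real.sqrt (s * Q : ℕ) : ℂ)) *
      (Complex.exp (((-(2 * Real.pi / (s * Q) * td.1 * a.1) : ℝ) : ℂ) * Complex.I) *
        (((Complex.exp (2 * Real.pi * Complex.I / s))⁻¹ ^ a.1) ^ k.1)) := by
  have hs' : (s : ℂ) ≠ 0 := by exact_mod_cast hs.ne'
  have hQ' : (Q : ℂ) ≠ 0 := by exact_mod_cast hQ.ne'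
  unfold dftMatrix posIdx
  rw [Matrix.of_apply, ← Complex.exp_neg, ← Complex.exp_nat_mul, ← Complex.exp_nat_mul,
    ← Complex.exp_add]
  congr 2
  simp only [finProdFinEquiv_apply_val]
  push_cast
  field_simp
  ring

lemma aux_sum (s : ℕ) (hs : 0 < s) (a b : Fin s) :
    ∑ k : Fin s, ((Complex.exp (2 * Real.pi * Complex.I / s)) ^ a.1 *
      (Complex.exp (2 * Real.pi * Complex.I / s))⁻¹ ^ b.1) ^ k.1 = if a = b then (s : ℂ) else 0 := by
  have hp := Complex.isPrimitiveRoot_exp s hs.ne'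
  set z := Complex.exp (2 * Real.pi * Complex.I / s) with hz
  have hz0 : z ≠ 0 := Complex.exp_ne_zero _
  split_ifs with h
  · subst h
    simp [mul_inv_cancel₀ (pow_ne_zero a.1 hz0)]
  · rw [Fin.sum_univ_eq_sum_range (fun k => (z ^ a.1 * z⁻¹ ^ b.1) ^ k) s]
    have h1 : z ^ a.1 * z⁻¹ ^ b.1 ≠ 1 := by
      intro h1
      apply h
      apply Fin.ext
      apply hp.pow_inj a.2 b.2
      rw [inv_pow] at h1
      field_simp at h1
      exact h1
    have h2 : (z ^ a.1 * z⁻¹ ^ b.1) ^ s = 1 := by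
      rw [mul_pow, ← pow_mul, ← pow_mul, mul_comm a.1, mul_comm b.1, pow_mul, pow_mul, inv_pow,
        hp.pow_eq_one]
      simp
    rw [geom_sum_eq h1, h2]
    simp

lemma aux_orth (s Q : ℕ) (hs : 0 < s) (hQ : 0 < Q) (td : Fin Q) (U : Matrix (Fin s) (Fin s) ℂ)
    (hU : ∀ k j, U k j = dftMatrix (s * Q) (posIdx s Q td k)
      ⟨j.1, lt_of_lt_of_le j.2 (Nat.le_mul_of_pos_right s hQ)⟩) :
    (Q : ℂ) • (Uᴴ * U) = 1 := by
  have hs' : (s : ℂ) ≠ 0 := by exact_mod_cast hs.ne'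
  have hQ' : (Q : ℂ) ≠ 0 := by exact_mod_cast hQ.ne'
  ext a b
  set z := Complex.exp (2 * Real.pi * Complex.I / s) with hz
  have hzc : star z⁻¹ = z := by
    rw [hz, ← Complex.exp_neg]
    change (starRingEnd ℂ) _ = _
    rw [← Complex.exp_conj]
    have h2 : (starRingEnd ℂ) 2 = 2 := Complex.conj_ofNat 2
    simp [neg_div, h2]
  have hsq : ((Real.sqrt (s * Q : ℕ) : ℝ) : ℂ) * (Real.sqrt (s * Q : ℕ) : ℂ) = s * Q := by
    rw [← Complex.ofReal_mul, Real.mul_self_sqrt (by positivity)]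
    push_cast; rfl
  set r : ℂ := (Real.sqrt (s * Q : ℕ) : ℂ) with hr
  have hrc : star r = r := Complex.conj_ofReal _
  let w : Fin s → ℂ := fun j =>
    Complex.exp (((-(2 * Real.pi / (s * Q) * td.1 * j.1) : ℝ) : ℂ) * Complex.I)
  have hww : ∀ j, star (w j) * w j = 1 := by
    intro j
    change (starRingEnd ℂ) _ * _ = _
    rw [mul_comm, Complex.mul_conj, Complex.normSq_eq_norm_sq, Complex.norm_exp_ofReal_mul_I]
    simp
  have hU' : ∀ k j : Fin s, U k j = (1 / r) * (w j * ((z⁻¹ ^ j.1) ^ k.1)) := by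
    intro k j
    rw [hU, aux_entry s Q hs hQ]
  have key : (Uᴴ * U) a b = (1 / (s * Q)) * (star (w a) * w b) *
      ∑ k : Fin s, (z ^ a.1 * z⁻¹ ^ b.1) ^ k.1 := by
    rw [Matrix.mul_apply, Finset.mul_sum]
    refine Finset.sum_congr rfl fun k _ => ?_
    rw [Matrix.conjTranspose_apply, hU', hU', star_mul', star_mul', star_pow, star_pow, hzc,
      star_div₀, star_one, hrc, ← hsq, mul_pow, one_div, one_div, mul_inv]
    ring
  rw [Matrix.smul_apply, key, aux_sum s hs, Matrix.one_apply]
  split_ifs with h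
  · subst h
    rw [hww, smul_eq_mul]
    field_simp
  · simp

/-- With `U_s` the first `s` columns of the `N×N` DFT matrix (`N = s·Q`), and `D` the diagonal
matrix with entries `c_k` at positions `Q(k−1)+t_d+1` and zero elsewhere, `Us† D Us` is
unitarily similar to `(s/N)·diag(c_1,…,c_s)`; in particular they have the same characteristic
polynomial (hence the same multiset of eigenvalues). -/
theorem stmt_13 (s Q : ℕ) (hs : 0 < s) (hQ : 0 < Q) (td : Fin Q)
    (Us : Matrix (Fin (s * Q)) (Fin s) ℂ)
    (hUs : ∀ (i : Fin (s * Q)) (j : Fin s),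
      Us i j = dftMatrix (s * Q) i ⟨j.1, lt_of_lt_of_le j.2 (Nat.le_mul_of_pos_right s hQ)⟩)
    (c : Fin s → ℝ)
    (D : Matrix (Fin (s * Q)) (Fin (s * Q)) ℂ)
    (hD : D = ∑ k : Fin s,
      (c k : ℂ) • Matrix.single (posIdx s Q td k) (posIdx s Q td k) 1) :
    ∃ V : Matrix.unitaryGroup (Fin s) ℂ,
      Usᴴ * D * Us =
          (V : Matrix (Fin s) (Fin s) ℂ) *
            (((s : ℂ) / ((s * Q : ℕ) : ℂ)) • Matrix.diagonal fun k => (c k : ℂ)) *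
            (V : Matrix (Fin s) (Fin s) ℂ)ᴴ ∧
        (Usᴴ * D * Us).charpoly =
          (((s : ℂ) / ((s * Q : ℕ) : ℂ)) • Matrix.diagonal fun k => (c k : ℂ)).charpoly := by
  have hs' : (s : ℂ) ≠ 0 := by exact_mod_cast hs.ne'
  have hQ' : (Q : ℂ) ≠ 0 := by exact_mod_cast hQ.ne'
  let U : Matrix (Fin s) (Fin s) ℂ := Matrix.of fun k j => Us (posIdx s Q td k) j
  have ho := aux_orth s Q hs hQ td U (fun k j => hUs _ _)
  let q : ℂ := ((Real.sqrt Q : ℝ) : ℂ)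
  have hqc : star q = q := Complex.conj_ofReal _
  have hqq : q * q = Q := by
    rw [← Complex.ofReal_mul, Real.mul_self_sqrt (by positivity)]
    push_cast; rfl
  let V : Matrix (Fin s) (Fin s) ℂ := q • Uᴴ
  have hVh : Vᴴ = q • U := by
    simp only [V, Matrix.conjTranspose_smul, Matrix.conjTranspose_conjTranspose, hqc]
  have hV : V * Vᴴ = 1 := by
    rw [hVh, ← ho, Matrix.smul_mul, Matrix.mul_smul, smul_smul, hqq]
  have hV2 : Vᴴ * V = 1 := mul_eq_one_comm.mp hV
  have hVm : V ∈ Matrix.unitaryGroup (Fin s) ℂ := Matrix.mem_unitaryGroup_iff.mpr hV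
  have main : Usᴴ * D * Us = V * (((s : ℂ) / ((s * Q : ℕ) : ℂ)) • Matrix.diagonal fun k => (c k : ℂ)) * Vᴴ := by
    have h1 : V * (((s : ℂ) / ((s * Q : ℕ) : ℂ)) • Matrix.diagonal fun k => (c k : ℂ)) * Vᴴ
        = Uᴴ * (Matrix.diagonal fun k => (c k : ℂ)) * U := by
      rw [hVh]
      simp only [V, Matrix.smul_mul, Matrix.mul_smul, smul_smul]
      have : q * (q * ((s : ℂ) / ((s * Q : ℕ) : ℂ))) = 1 := by
        rw [← mul_assoc, hqq]
        push_cast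
        field_simp
      first
        | rw [this, one_smul]
        | (rw [show ∀ x : ℂ, q * (x * q) = q * (q * x) from fun x => by ring, this, one_smul])
    rw [h1, hD]
    ext a b
    rw [Matrix.mul_sum, Matrix.sum_mul, Matrix.sum_apply, Matrix.mul_apply]
    refine Finset.sum_congr rfl fun k _ => ?_
    rw [Matrix.mul_diagonal, Matrix.mul_smul, Matrix.smul_mul, Matrix.smul_apply, Matrix.mul_apply,
      Finset.sum_eq_single (posIdx s Q td k)]
    · simp [U]
      ring
    · intro i _ hi
      rw [Matrix.mul_single_apply_of_ne _ _ _ _ _ hi, zero_mul]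
    · simp
  refine ⟨⟨V, hVm⟩, main, ?_⟩
  rw [main, Matrix.mul_assoc, Matrix.charpoly_mul_comm, Matrix.mul_assoc, hV2, Matrix.mul_one]
end

section
/- Under the energy-harvesting block-transmission model, for every r in the interval (0, 1/η_U], the smallest eigenvalue of the random matrix U_s† G U_s satisfies P( λ_min(U_s† G U_s) > μ_E·(s/P_x)·(1/η_U − r) ) ≥ 1 − f_bt(μ_I, ϱ_I, r), where μ_I = (1/η_L)·max{r_E − 1, 1}·min{Q·η_U, 1} and ϱ_I = (ϱ_E/μ_E²)·(1/η_L²)·(1/Q)·min{Q·η_U, 1}. -/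
open Matrix Finset MeasureTheory ProbabilityTheory

/-- Squared Euclidean norm of `u_i`, the conjugate transpose of the `i`-th row of `Us`. -/
noncomputable def rowNormSq {N s : ℕ} (Us : Matrix (Fin N) (Fin s) ℂ) (i : Fin N) : ℝ :=
  ∑ j, ‖Us i j‖ ^ 2

/-- The (0-based) global index `(k−1)·Q + t` of sample `t` of block `k`. -/
def blockIdx (nT Q : ℕ) (k : Fin nT) (t : Fin Q) : Fin (nT * Q) := finProdFinEquiv (k, t)

/-- The block containing global index `i`. -/
def blockOf (nT Q : ℕ) (i : Fin (nT * Q)) : Fin nT := (finProdFinEquiv.symm i).1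

/-- `h(a) = (1+a)·log(1+a) − a`. -/
noncomputable def hfun (a : ℝ) : ℝ := (1 + a) * Real.log (1 + a) - a

/-- `f_bt(μ, ϱ, r) = 2s·exp(−(ϱ/μ²)·h(μ·r/ϱ))`. -/
noncomputable def fbt (s : ℕ) (μ ϱ r : ℝ) : ℝ :=
  2 * s * Real.exp (-(ϱ / μ ^ 2) * hfun (μ * r / ϱ))


noncomputable def spm {n : Type*} [Fintype n] [DecidableEq n] (U : Matrix n n ℂ) (a : n → ℝ) :
    Matrix n n ℂ := U * diagonal (fun i => (a i : ℂ)) * Uᴴ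

section mat
open scoped ComplexOrder
variable {n : Type*} [Fintype n] [DecidableEq n]

lemma spm_mul (U : Matrix n n ℂ) (hU : Uᴴ * U = 1) (a b : n → ℝ) :
    spm U a * spm U b = spm U (fun i => a i * b i) := by
  unfold spm
  calc _ = U * diagonal (fun i => (a i : ℂ)) * (Uᴴ * U) * diagonal (fun i => (b i : ℂ)) * Uᴴ := by
        noncomm_ring
    _ = _ := by
        rw [hU, Matrix.mul_one, Matrix.mul_assoc U, diagonal_mul_diagonal]; simp

lemma spm_one (U : Matrix n n ℂ) (hU : U * Uᴴ = 1) : spm U (fun _ => 1) = 1 := by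
  simp [spm, hU]

lemma exists_spm (X : Matrix n n ℂ) (hX : X.IsHermitian) :
    ∃ (U : Matrix n n ℂ) (x : n → ℝ), Uᴴ * U = 1 ∧ U * Uᴴ = 1 ∧ X = spm U x ∧
      NormedSpace.exp X = spm U (fun i => Real.exp (x i)) := by
  have h1 : (hX.eigenvectorUnitary : Matrix n n ℂ)ᴴ * (hX.eigenvectorUnitary : Matrix n n ℂ) = 1 :=
    Unitary.coe_star_mul_self _
  have h2 : (hX.eigenvectorUnitary : Matrix n n ℂ) * (hX.eigenvectorUnitary : Matrix n n ℂ)ᴴ = 1 :=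
    Unitary.coe_mul_star_self _
  have h3 : X = spm (hX.eigenvectorUnitary : Matrix n n ℂ) hX.eigenvalues := by
    have := hX.spectral_theorem
    rw [Unitary.conjStarAlgAut_apply] at this
    exact this
  refine ⟨hX.eigenvectorUnitary, hX.eigenvalues, h1, h2, h3, ?_⟩
  generalize (hX.eigenvectorUnitary : Matrix n n ℂ) = U at *
  generalize hX.eigenvalues = x at *
  have hu : IsUnit U := (IsUnit.of_mul_eq_one _ h2)
  have hi : U⁻¹ = Uᴴ := Matrix.inv_eq_right_inv h2
  rw [h3, spm, ← hi, Matrix.exp_conj U _ hu, Matrix.exp_diagonal, hi, spm]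
  congr 3
  ext i
  rw [Pi.coe_exp]
  simp [Complex.exp_eq_exp_ℂ]

lemma trace_spm (U V : Matrix n n ℂ) (a b : n → ℝ) :
    (spm U a * spm V b).trace.re = ∑ i, ∑ j, ‖(Uᴴ * V) i j‖ ^ 2 * (a i * b j) := by
  have : (spm U a * spm V b).trace =
      (diagonal (fun i => (a i : ℂ)) * (Uᴴ * V) * diagonal (fun i => (b i : ℂ)) * (Uᴴ * V)ᴴ).trace := by
    unfold spm
    rw [conjTranspose_mul, conjTranspose_conjTranspose, Matrix.mul_assoc U, Matrix.mul_assoc U,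
      trace_mul_comm U]
    congr 1
    noncomm_ring
  rw [this]
  simp only [trace, Matrix.diag, Matrix.mul_apply (N := (Uᴴ * V)ᴴ), mul_diagonal, diagonal_mul,
    conjTranspose_apply, Complex.re_sum]
  refine Finset.sum_congr rfl fun i _ => Finset.sum_congr rfl fun j _ => ?_
  generalize (Uᴴ * V) i j = z
  have : (a i : ℂ) * z * b j * star z = ((a i * b j * ‖z‖ ^ 2 : ℝ) : ℂ) := by
    have := Complex.mul_conj' z
    push_cast
    rw [← this]
    simp only [Complex.star_def]
    ring
  rw [this, Complex.ofReal_re]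
  ring

/-- trace exp -/
noncomputable def tre (X : Matrix n n ℂ) : ℝ := (NormedSpace.exp X).trace.re

noncomputable def trA (A X : Matrix n n ℂ) : ℝ := (A * NormedSpace.exp X).trace.re

lemma two_mat (X Y : Matrix n n ℂ) (hX : X.IsHermitian) (hY : Y.IsHermitian) :
    ∃ (w : n → n → ℝ) (x y : n → ℝ), (∀ i j, 0 ≤ w i j) ∧
      tre X = ∑ i, ∑ j, w i j * Real.exp (x i) ∧
      tre Y = ∑ i, ∑ j, w i j * Real.exp (y j) ∧
      trA X X = ∑ i, ∑ j, w i j * (x i * Real.exp (x i)) ∧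
      trA Y X = ∑ i, ∑ j, w i j * (y j * Real.exp (x i)) ∧
      trA X Y = ∑ i, ∑ j, w i j * (x i * Real.exp (y j)) ∧
      trA Y Y = ∑ i, ∑ j, w i j * (y j * Real.exp (y j)) ∧
      trA (X * X) X = ∑ i, ∑ j, w i j * (x i * x i * Real.exp (x i)) ∧
      trA (X * Y) X = ∑ i, ∑ j, w i j * (x i * y j * Real.exp (x i)) ∧
      trA (Y * X) X = ∑ i, ∑ j, w i j * (x i * y j * Real.exp (x i)) ∧
      trA (Y * Y) X = ∑ i, ∑ j, w i j * (y j * y j * Real.exp (x i)) ∧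
      trA (X * X) Y = ∑ i, ∑ j, w i j * (x i * x i * Real.exp (y j)) ∧
      trA (X * Y) Y = ∑ i, ∑ j, w i j * (x i * y j * Real.exp (y j)) ∧
      trA (Y * X) Y = ∑ i, ∑ j, w i j * (x i * y j * Real.exp (y j)) ∧
      trA (Y * Y) Y = ∑ i, ∑ j, w i j * (y j * y j * Real.exp (y j)) := by
  obtain ⟨U, x, hU1, hU2, hx, hex⟩ := exists_spm X hX
  obtain ⟨V, y, hV1, hV2, hy, hey⟩ := exists_spm Y hY
  refine ⟨fun i j => ‖(Uᴴ * V) i j‖ ^ 2, x, y, fun i j => by positivity, ?_⟩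
  have key : ∀ (M : Matrix n n ℂ) (a b : n → ℝ) (_ : M.trace = (spm U a * spm V b).trace),
      M.trace.re = ∑ i, ∑ j, ‖(Uᴴ * V) i j‖ ^ 2 * (a i * b j) := by
    intro M a b h; rw [h, trace_spm]
  have oU := spm_one U hU2
  have oV := spm_one V hV2
  unfold tre trA
  rw [hex, hey]
  refine ⟨?_, ?_, ?_, ?_, ?_, ?_, ?_, ?_, ?_, ?_, ?_, ?_, ?_, ?_⟩
  · rw [key _ (fun i => Real.exp (x i)) (fun _ => 1) (by rw [oV, Matrix.mul_one])]; simp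
  · rw [key _ (fun _ => 1) (fun i => Real.exp (y i)) (by rw [oU, Matrix.one_mul])]; simp
  · rw [key _ (fun i => x i * Real.exp (x i)) (fun _ => 1)
      (by rw [oV, Matrix.mul_one, ← spm_mul _ hU1, ← hx])]; simp
  · rw [key _ (fun i => Real.exp (x i)) y (by rw [trace_mul_comm, ← hy])]
    simp only [mul_comm (Real.exp _)]
  · rw [key _ x (fun i => Real.exp (y i)) (by rw [← hx])]
  · rw [key _ (fun _ => 1) (fun i => y i * Real.exp (y i))
      (by rw [oU, Matrix.one_mul, ← spm_mul _ hV1, ← hy])]; simp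
  · rw [key _ (fun i => x i * x i * Real.exp (x i)) (fun _ => 1)
      (by rw [oV, Matrix.mul_one, ← spm_mul _ hU1, ← spm_mul _ hU1, ← hx])]; simp
  · rw [key _ (fun i => Real.exp (x i) * x i) y
      (by rw [← spm_mul _ hU1, ← hx, ← hy, trace_mul_comm, Matrix.mul_assoc])]
    refine Finset.sum_congr rfl fun i _ => Finset.sum_congr rfl fun j _ => by ring
  · rw [key _ (fun i => x i * Real.exp (x i)) y
      (by rw [← spm_mul _ hU1, ← hx, ← hy, Matrix.mul_assoc, trace_mul_comm])]
    refine Finset.sum_congr rfl fun i _ => Finset.sum_congr rfl fun j _ => by ring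
  · rw [key _ (fun i => Real.exp (x i)) (fun i => y i * y i)
      (by rw [← spm_mul _ hV1, ← hy, trace_mul_comm])]
    refine Finset.sum_congr rfl fun i _ => Finset.sum_congr rfl fun j _ => by ring
  · rw [key _ (fun i => x i * x i) (fun i => Real.exp (y i)) (by rw [← spm_mul _ hU1, ← hx])]
  · rw [key _ x (fun i => y i * Real.exp (y i))
      (by rw [← spm_mul _ hV1, ← hx, ← hy, Matrix.mul_assoc])]
    refine Finset.sum_congr rfl fun i _ => Finset.sum_congr rfl fun j _ => by ring
  · rw [key _ x (fun i => Real.exp (y i) * y i)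
      (by rw [← spm_mul _ hV1, ← hx, ← hy, Matrix.mul_assoc, trace_mul_comm, Matrix.mul_assoc])]
    refine Finset.sum_congr rfl fun i _ => Finset.sum_congr rfl fun j _ => by ring
  · rw [key _ (fun _ => 1) (fun i => y i * y i * Real.exp (y i))
      (by rw [oU, Matrix.one_mul, ← spm_mul _ hV1, ← spm_mul _ hV1, ← hy])]; simp

lemma trA_sub (A B X : Matrix n n ℂ) : trA (A - B) X = trA A X - trA B X := by
  simp [trA, Matrix.sub_mul, Matrix.trace_sub]
lemma trA_add (A B X : Matrix n n ℂ) : trA (A + B) X = trA A X + trA B X := by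
  simp [trA, Matrix.add_mul, Matrix.trace_add]
lemma trA_smul (c : ℝ) (A X : Matrix n n ℂ) : trA (c • A) X = c * trA A X := by
  simp [trA, Matrix.trace_smul]

lemma scal_exp (x y : ℝ) :
    2 * ((y - x) * (Real.exp y - Real.exp x)) ≤ (y - x) ^ 2 * (Real.exp x + Real.exp y) := by
  -- wlog via function
  have key : ∀ z : ℝ, 0 ≤ z → 2 * (Real.exp z - 1) ≤ z * (1 + Real.exp z) := by
    intro z hz
    have hmono : MonotoneOn (fun z : ℝ => z * (1 + Real.exp z) - 2 * (Real.exp z - 1)) (Set.Ici 0) := by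
      apply monotoneOn_of_deriv_nonneg (convex_Ici 0) (by fun_prop) (by fun_prop)
      intro u hu
      have hd : HasDerivAt (fun z : ℝ => z * (1 + Real.exp z) - 2 * (Real.exp z - 1))
          (1 * (1 + Real.exp u) + u * Real.exp u - 2 * Real.exp u) u := by
        have h1 := Real.hasDerivAt_exp u
        exact ((hasDerivAt_id u).mul (h1.const_add 1)).sub ((h1.sub_const 1).const_mul 2)
      rw [hd.deriv]
      have h3 : 1 - u ≤ Real.exp (-u) := by have := Real.add_one_le_exp (-u); linarith
      have h4 : Real.exp (-u) * Real.exp u = 1 := by rw [← Real.exp_add]; simp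
      nlinarith [Real.exp_pos u]
    have := hmono (Set.mem_Ici.2 le_rfl) (Set.mem_Ici.2 hz) hz
    simp at this
    linarith
  have main : ∀ x y : ℝ, x ≤ y →
      2 * ((y - x) * (Real.exp y - Real.exp x)) ≤ (y - x) ^ 2 * (Real.exp x + Real.exp y) := by
    intro x y h
    have h0 : 0 ≤ y - x := by linarith
    have h1 := key (y - x) h0
    have h2 : Real.exp y = Real.exp x * Real.exp (y - x) := by rw [← Real.exp_add]; congr 1; ring
    rw [h2]
    have h3 := mul_le_mul_of_nonneg_left h1 (mul_nonneg h0 (Real.exp_pos x).le)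
    nlinarith
  rcases le_total x y with h | h
  · exact main x y h
  · have := main y x h; nlinarith

lemma klein (X Y : Matrix n n ℂ) (hX : X.IsHermitian) (hY : Y.IsHermitian) :
    trA (Y - X) X ≤ tre Y - tre X := by
  obtain ⟨w, x, y, hw, h1, h2, h3, h4, -⟩ := two_mat X Y hX hY
  rw [trA_sub, h1, h2, h3, h4]
  simp only [← Finset.sum_sub_distrib]
  refine Finset.sum_le_sum fun i _ => Finset.sum_le_sum fun j _ => ?_
  simp only [← mul_sub]
  refine mul_le_mul_of_nonneg_left ?_ (hw i j)
  have h5 := Real.add_one_le_exp (y j - x i)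
  have h6 : Real.exp (y j) = Real.exp (x i) * Real.exp (y j - x i) := by
    rw [← Real.exp_add]; congr 1; ring
  rw [h6]
  nlinarith [Real.exp_pos (x i)]

lemma second (X Y : Matrix n n ℂ) (hX : X.IsHermitian) (hY : Y.IsHermitian) :
    2 * (trA (Y - X) Y - trA (Y - X) X) ≤
      trA ((Y - X) * (Y - X)) X + trA ((Y - X) * (Y - X)) Y := by
  obtain ⟨w, x, y, hw, h1, h2, h3, h4, h5, h6, h7, h8, h9, h10, h11, h12, h13, h14⟩ :=
    two_mat X Y hX hY
  simp only [mul_sub, sub_mul, trA_sub]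
  rw [h3, h4, h5, h6, h7, h8, h9, h10, h11, h12, h13, h14]
  simp only [Finset.mul_sum, ← Finset.sum_sub_distrib, ← Finset.sum_add_distrib]
  refine Finset.sum_le_sum fun i _ => Finset.sum_le_sum fun j _ => ?_
  have := mul_le_mul_of_nonneg_left (scal_exp (x i) (y j)) (hw i j)
  nlinarith

lemma trA_nonneg (A X : Matrix n n ℂ) (hA : A.PosSemidef) (hX : X.IsHermitian) : 0 ≤ trA A X := by
  obtain ⟨U, x, hU1, hU2, hx, hex⟩ := exists_spm X hX
  obtain ⟨V, y, hV1, hV2, hy, hey⟩ := exists_spm X hX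
  have hsq : NormedSpace.exp X = spm U (fun i => Real.exp (x i / 2)) * (spm U (fun i => Real.exp (x i / 2)))ᴴ := by
    have : (spm U (fun i => Real.exp (x i / 2)))ᴴ = spm U (fun i => Real.exp (x i / 2)) := by
      simp only [spm, conjTranspose_mul, conjTranspose_conjTranspose, diagonal_conjTranspose,
        Matrix.mul_assoc]
      congr 3
      ext i; rw [Pi.star_apply, Complex.star_def, Complex.conj_ofReal]
    rw [this, spm_mul _ hU1, hex]
    congr 1; ext i; rw [← Real.exp_add]; congr 1; ring
  unfold trA
  rw [hsq, ← Matrix.mul_assoc, trace_mul_comm, ← Matrix.mul_assoc]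
  exact (Complex.le_def.1 (hA.conjTranspose_mul_mul_same _).trace_nonneg).1

end mat

section scal
open Filter Topology

lemma growth_g (g : ℝ → ℝ) (R : ℝ) (hR : 0 < R) 
    (h2 : ∀ a b, a ≤ b → 2 * ((b - a) * (g b - g a)) ≤ (b - a) ^ 2 * (R * (g a + g b)))
    (a b : ℝ) (hab : a ≤ b) : g b ≤ g a * Real.exp (R * (b - a)) := by
  set D := b - a with hD
  have hD0 : 0 ≤ D := by linarith
  have step : ∀ u δ : ℝ, 0 ≤ δ → g (u + δ) * (1 - R * δ / 2) ≤ g u * (1 + R * δ / 2) := by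
    intro u δ hδ
    rcases hδ.eq_or_lt with rfl | hδ
    · simp
    have := h2 u (u + δ) (by linarith)
    have h3 : δ * (2 * (g (u + δ) - g u)) ≤ δ * (δ * (R * (g u + g (u + δ)))) := by
      have e : u + δ - u = δ := by ring
      rw [e] at this; linarith
    have := le_of_mul_le_mul_left h3 hδ
    linarith
  have iter : ∀ (δ : ℝ), 0 ≤ δ → R * δ / 2 ≤ 1 → ∀ k : ℕ,
      g (a + k * δ) * (1 - R * δ / 2) ^ k ≤ g a * (1 + R * δ / 2) ^ k := by
    intro δ hδ h1 k
    induction k with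
    | zero => simp
    | succ k ih =>
      have hs := step (a + k * δ) δ hδ
      have e : a + ((k + 1 : ℕ) : ℝ) * δ = a + k * δ + δ := by push_cast; ring
      rw [e, pow_succ', pow_succ']
      have p1 : 0 ≤ (1 - R * δ / 2) ^ k := pow_nonneg (by linarith) k
      have p2 : 0 ≤ 1 + R * δ / 2 := by positivity
      have h3 := mul_le_mul_of_nonneg_right hs p1
      have h4 := mul_le_mul_of_nonneg_left ih p2
      nlinarith
  have l1 := (Real.tendsto_one_add_div_pow_exp (-(R * D / 2))).const_mul (g b)
  have l2 := (Real.tendsto_one_add_div_pow_exp (R * D / 2)).const_mul (g a)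
  have hle : ∀ᶠ n : ℕ in atTop, g b * (1 + -(R * D / 2) / n) ^ n ≤ g a * (1 + R * D / 2 / n) ^ n := by
    have : ∀ᶠ n : ℕ in atTop, R * D / 2 < (n : ℝ) := tendsto_natCast_atTop_atTop.eventually_gt_atTop _
    filter_upwards [this, eventually_gt_atTop 0] with n hn hn0
    have hn0' : (0 : ℝ) < n := by exact_mod_cast hn0
    have := iter (D / n) (by positivity) (by rw [← mul_div_assoc, div_div, div_le_one (by positivity)]; linarith) n
    have e : a + n * (D / n) = b := by field_simp; linarith
    rw [e] at this
    convert! this using 3 <;> ring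
  have h5 := le_of_tendsto_of_tendsto l1 l2 hle
  have h6 := mul_le_mul_of_nonneg_right h5 (Real.exp_pos (R * D / 2)).le
  rw [mul_assoc, mul_assoc, ← Real.exp_add, ← Real.exp_add] at h6
  simp at h6
  convert! h6 using 3

lemma growth_f (f g : ℝ → ℝ) (R : ℝ) (hR : 0 < R)
    (h1 : ∀ a b, (b - a) * g a ≤ f b - f a)
    (h2 : ∀ a b, a ≤ b → 2 * ((b - a) * (g b - g a)) ≤ (b - a) ^ 2 * (R * (g a + g b)))
    (t : ℝ) : f t ≤ f 0 + g 0 * ((Real.exp (R * t) - 1) / R) := by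
  have hg := growth_g g R hR h2
  have hmono : Monotone g := by
    intro a b hab
    rcases hab.eq_or_lt with rfl | hab
    · exact le_rfl
    have := h1 a b; have := h1 b a
    nlinarith
  have hcont : Continuous g := by
    rw [continuous_iff_continuousAt]
    intro a
    have u1 : Tendsto (fun b => g a * Real.exp (R * (b - a))) (𝓝 a) (𝓝 (g a)) := by
      have : Continuous (fun b => g a * Real.exp (R * (b - a))) := by fun_prop
      simpa using this.tendsto a
    have m1 : Tendsto (fun b => max (g a) (g a * Real.exp (R * (b - a)))) (𝓝 a) (𝓝 (g a)) := by
      simpa using (tendsto_const_nhds (x := g a)).max u1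
    have m2 : Tendsto (fun b => min (g a) (g a * Real.exp (R * (b - a)))) (𝓝 a) (𝓝 (g a)) := by
      simpa using (tendsto_const_nhds (x := g a)).min u1
    refine tendsto_of_tendsto_of_tendsto_of_le_of_le m2 m1 ?_ ?_
    · intro b
      rcases le_total a b with h | h
      · exact (min_le_left _ _).trans (hmono h)
      · refine (min_le_right _ _).trans ?_
        have := mul_le_mul_of_nonneg_right (hg b a h) (Real.exp_pos (R * (b - a))).le
        rw [mul_assoc, ← Real.exp_add] at this
        have e : R * (a - b) + R * (b - a) = 0 := by ring
        rw [e] at this; simpa using this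
    · intro b
      rcases le_total a b with h | h
      · exact (hg a b h).trans (le_max_right _ _)
      · exact (hmono h).trans (le_max_left _ _)
  have hder : ∀ a, HasDerivAt f (g a) a := by
    intro a
    rw [hasDerivAt_iff_tendsto_slope]
    have hc : Tendsto g (𝓝[≠] a) (𝓝 (g a)) := hcont.continuousAt.tendsto.mono_left nhdsWithin_le_nhds
    have m1 : Tendsto (fun b => max (g a) (g b)) (𝓝[≠] a) (𝓝 (g a)) := by
      simpa using (tendsto_const_nhds (x := g a)).max hc
    have m2 : Tendsto (fun b => min (g a) (g b)) (𝓝[≠] a) (𝓝 (g a)) := by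
      simpa using (tendsto_const_nhds (x := g a)).min hc
    refine tendsto_of_tendsto_of_tendsto_of_le_of_le' m2 m1 ?_ ?_
    · filter_upwards [self_mem_nhdsWithin] with b hb
      rw [slope_def_field]
      have i1 := h1 a b; have i2 := h1 b a
      rcases lt_or_gt_of_ne (show b ≠ a from hb) with h | h
      · refine (min_le_right _ _).trans ?_
        rw [le_div_iff_of_neg (by linarith)]; linarith
      · refine (min_le_left _ _).trans ?_
        rw [le_div_iff₀ (by linarith)]; linarith
    · filter_upwards [self_mem_nhdsWithin] with b hb
      rw [slope_def_field]
      have i1 := h1 a b; have i2 := h1 b a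
      rcases lt_or_gt_of_ne (show b ≠ a from hb) with h | h
      · refine le_trans ?_ (le_max_left _ _)
        rw [div_le_iff_of_neg (by linarith)]; linarith
      · refine le_trans ?_ (le_max_right _ _)
        rw [div_le_iff₀ (by linarith)]; linarith
  set Ψ : ℝ → ℝ := fun t => f t - g 0 * (Real.exp (R * t) / R) with hΨ
  have hΨd : ∀ a, HasDerivAt Ψ (g a - g 0 * Real.exp (R * a)) a := by
    intro a
    have e1 : HasDerivAt (fun t => Real.exp (R * t)) (Real.exp (R * a) * (R * 1)) a :=
      ((hasDerivAt_id a).const_mul R).exp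
    have := (hder a).sub ((e1.div_const R).const_mul (g 0))
    convert! this using 1
    field_simp
  have hΨc : Continuous Ψ := continuous_iff_continuousAt.2 fun a => (hΨd a).continuousAt
  have hΨD : Differentiable ℝ Ψ := fun a => (hΨd a).differentiableAt
  have key : Ψ t ≤ Ψ 0 := by
    rcases le_total 0 t with h | h
    · have : AntitoneOn Ψ (Set.Ici 0) := by
        apply antitoneOn_of_deriv_nonpos (convex_Ici 0) hΨc.continuousOn hΨD.differentiableOn
        intro x hx
        rw [interior_Ici] at hx
        rw [(hΨd x).deriv]
        have := hg 0 x (le_of_lt hx)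
        simp at this; linarith
      exact this (Set.mem_Ici.2 le_rfl) (Set.mem_Ici.2 h) h
    · have : MonotoneOn Ψ (Set.Iic 0) := by
        apply monotoneOn_of_deriv_nonneg (convex_Iic 0) hΨc.continuousOn hΨD.differentiableOn
        intro x hx
        rw [interior_Iic] at hx
        rw [(hΨd x).deriv]
        have := mul_le_mul_of_nonneg_right (hg x 0 (le_of_lt hx)) (Real.exp_pos (R * x)).le
        rw [mul_assoc, ← Real.exp_add] at this
        have e : R * (0 - x) + R * x = 0 := by ring
        rw [e] at this; simp at this; linarith
      exact this (Set.mem_Iic.2 h) (Set.mem_Iic.2 le_rfl) h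
  simp only [hΨ, mul_zero, Real.exp_zero] at key
  rw [sub_div, mul_sub]; linarith

lemma bennett_pt (y K : ℝ) (hK : 0 < K) (hy : y ≤ K) :
    Real.exp y ≤ 1 + y + y ^ 2 * ((Real.exp K - K - 1) / K ^ 2) := by
  have hq : 1 + K + K ^ 2 / 2 ≤ Real.exp K := Real.quadratic_le_exp_of_nonneg hK.le
  have hcoef : 1 / 2 ≤ (Real.exp K - K - 1) / K ^ 2 := by
    rw [le_div_iff₀ (by positivity)]; linarith
  rcases le_total y 0 with h | h
  · have : Real.exp y ≤ 1 + y + y ^ 2 / 2 := by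
      have hm : MonotoneOn (fun z : ℝ => Real.exp z - (1 + z + z ^ 2 / 2)) (Set.Iic 0) := by
        apply monotoneOn_of_deriv_nonneg (convex_Iic 0) (by fun_prop) (by fun_prop)
        intro u hu
        have hd : HasDerivAt (fun z : ℝ => Real.exp z - (1 + z + z ^ 2 / 2)) (Real.exp u - (1 + u)) u := by
          have := (Real.hasDerivAt_exp u).sub (((hasDerivAt_id u).const_add 1).add
            (((hasDerivAt_id u).pow 2).div_const 2))
          convert! this using 1
          simp
        rw [hd.deriv]
        have := Real.add_one_le_exp u; linarith
      have := hm (Set.mem_Iic.2 h) (Set.mem_Iic.2 le_rfl) h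
      simp at this; linarith
    nlinarith [sq_nonneg y]
  · have hs : ∀ x : ℝ, HasSum (fun n : ℕ => x ^ (n + 2) / ((n + 2).factorial : ℝ)) (Real.exp x - x - 1) := by
      intro x
      have := (hasSum_nat_add_iff' 2).2 (NormedSpace.expSeries_div_hasSum_exp (𝔸 := ℝ) x)
      rw [← Real.exp_eq_exp_ℝ] at this
      convert! this using 1
      simp [Finset.sum_range_succ]; ring
    have hle := hasSum_le (f := fun n : ℕ => y ^ (n + 2) / ((n + 2).factorial : ℝ))
      (g := fun n : ℕ => (y ^ 2 / K ^ 2) * (K ^ (n + 2) / ((n + 2).factorial : ℝ))) ?_ (hs y)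
      ((hs K).mul_left (y ^ 2 / K ^ 2))
    · have e : y ^ 2 * ((Real.exp K - K - 1) / K ^ 2) = y ^ 2 / K ^ 2 * (Real.exp K - K - 1) := by ring
      rw [e]; linarith
    · intro n
      rw [← mul_div_assoc]
      gcongr
      have : y ^ 2 / K ^ 2 * K ^ (n + 2) = y ^ 2 * K ^ n := by rw [pow_add]; field_simp
      rw [this, pow_add, mul_comm]
      gcongr
end scal

section prob
open scoped ComplexOrder
variable {n : Type*} [Fintype n] [DecidableEq n]

lemma herm_add_smul {X A : Matrix n n ℂ} (hX : X.IsHermitian) (hA : A.IsHermitian) (t : ℝ) :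
    (X + t • A).IsHermitian := by
  unfold Matrix.IsHermitian at *
  simp [hX, hA]

lemma step_mat (X A : Matrix n n ℂ) (hX : X.IsHermitian) (hA : A.PosSemidef) (m : ℝ) (hm : 0 < m)
    (hmA : (m • A - A * A).PosSemidef) (t : ℝ) :
    tre (X + t • A) ≤ tre X + trA A X * ((Real.exp (m * t) - 1) / m) := by
  have hH := fun t => herm_add_smul hX hA.1 t
  have hd : ∀ a b : ℝ, (X + b • A) - (X + a • A) = (b - a) • A := by
    intro a b; rw [sub_smul]; abel
  have := growth_f (fun t => tre (X + t • A)) (fun t => trA A (X + t • A)) m hm ?_ ?_ t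
  · simpa using this
  · intro a b
    have := klein (X + a • A) (X + b • A) (hH a) (hH b)
    rwa [hd, trA_smul] at this
  · intro a b hab
    have := second (X + a • A) (X + b • A) (hH a) (hH b)
    simp only [hd, trA_smul, Matrix.smul_mul, Matrix.mul_smul] at this
    have h1 := trA_nonneg _ _ hmA (hH a)
    have h2 := trA_nonneg _ _ hmA (hH b)
    rw [trA_sub, trA_smul] at h1 h2
    nlinarith [sq_nonneg (b - a)]

lemma step_mat2 (X A : Matrix n n ℂ) (hX : X.IsHermitian) (hA : A.IsHermitian) (c : ℝ) :
    tre X + trA A X * c ≤ tre (X + c • A) := by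
  have := klein X (X + c • A) hX (herm_add_smul hX hA c)
  rw [add_sub_cancel_left, trA_smul] at this
  linarith

section cont
attribute [local instance] Matrix.linftyOpNormedRing Matrix.linftyOpNormedAlgebra

lemma continuous_mexp : Continuous (NormedSpace.exp : Matrix n n ℂ → Matrix n n ℂ) := by
  let _ : NormedAlgebra ℚ (Matrix n n ℂ) := NormedAlgebra.restrictScalars ℚ ℂ _
  exact NormedSpace.exp_continuous
end cont

lemma continuous_tre : Continuous (tre : Matrix n n ℂ → ℝ) :=
  Complex.continuous_re.comp (continuous_mexp.matrix_trace)

lemma continuous_trA (A : Matrix n n ℂ) : Continuous (trA A : Matrix n n ℂ → ℝ) :=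
  Complex.continuous_re.comp ((continuous_const.matrix_mul continuous_mexp).matrix_trace)

variable {Ω : Type*} [MeasurableSpace Ω] {P : Measure Ω} [IsProbabilityMeasure P]

lemma integrable_cont {ι : Type*} [Finite ι] (ξ : ι → Ω → ℝ) (hmeas : ∀ i, Measurable (ξ i))
    (M : ℝ) (hb : ∀ i, ∀ᵐ ω ∂P, |ξ i ω| ≤ M) (F : (ι → ℝ) → ℝ) (hF : Continuous F) :
    Integrable (fun ω => F (fun i => ξ i ω)) P := by
  have := Fintype.ofFinite ι
  have hc : IsCompact (Set.univ.pi fun _ : ι => Set.Icc (-M) M) :=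
    isCompact_univ_pi fun _ => isCompact_Icc
  obtain ⟨C, hC⟩ := hc.exists_bound_of_continuousOn hF.continuousOn
  refine Integrable.of_bound (hF.measurable.comp (measurable_pi_lambda _ hmeas)).aestronglyMeasurable C ?_
  filter_upwards [ae_all_iff.2 hb] with ω hω
  exact hC _ fun i _ => abs_le.1 (hω i)

lemma prob_step {ι : Type*} [Finite ι] (ξ : ι → Ω → ℝ) (hmeas : ∀ i, Measurable (ξ i))
    (hindep : iIndepFun ξ P)
    (M : ℝ) (hb : ∀ i, ∀ᵐ ω ∂P, |ξ i ω| ≤ M) (B : ι → Matrix n n ℂ) (hB : ∀ i, (B i).PosSemidef)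
    (m : ℝ) (hm : 0 < m) (hmB : ∀ i, (m • B i - B i * B i).PosSemidef)
    (c : ℝ) (hc : ∀ i, ∫ ω, (Real.exp (m * ξ i ω) - 1) / m ∂P ≤ c) (T : Finset ι) :
    ∀ H : Matrix n n ℂ, H.IsHermitian →
      ∫ ω, tre (H + ∑ i ∈ T, ξ i ω • B i) ∂P ≤ tre (H + ∑ i ∈ T, c • B i) := by
  classical
  have hsum : ∀ (T : Finset ι) (v : ι → ℝ) (H : Matrix n n ℂ), H.IsHermitian →
      (H + ∑ i ∈ T, v i • B i).IsHermitian := by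
    intro T v
    induction T using Finset.induction_on with
    | empty => intro H hH; simpa using hH
    | insert k T hk ih =>
      intro H hH
      rw [Finset.sum_insert hk, ← add_assoc]
      exact ih _ (herm_add_smul hH (hB k).1 _)
  induction T using Finset.induction_on with
  | empty => intro H hH; simp
  | insert k T hk ih =>
    intro H hH
    set F : (ι → ℝ) → Matrix n n ℂ := fun v => H + ∑ i ∈ T, v i • B i with hF
    have hFc : Continuous F := by fun_prop
    have hFH : ∀ v, (F v).IsHermitian := fun v => hsum T v H hH
    have i1 : Integrable (fun ω => tre (F fun i => ξ i ω)) P :=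
      integrable_cont ξ hmeas M hb (fun v => tre (F v)) (continuous_tre.comp hFc)
    have i2 : Integrable (fun ω => trA (B k) (F fun i => ξ i ω)) P :=
      integrable_cont ξ hmeas M hb (fun v => trA (B k) (F v)) ((continuous_trA _).comp hFc)
    have i3 : Integrable (fun ω => trA (B k) (F fun i => ξ i ω) * ((Real.exp (m * ξ k ω) - 1) / m)) P :=
      integrable_cont ξ hmeas M hb (fun v => trA (B k) (F v) * ((Real.exp (m * v k) - 1) / m))
        (((continuous_trA _).comp hFc).mul (by fun_prop))
    have i4 : Integrable (fun ω => tre (F (fun i => ξ i ω) + c • B k)) P :=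
      integrable_cont ξ hmeas M hb (fun v => tre (F v + c • B k))
        (continuous_tre.comp (by fun_prop))
    have i5 : Integrable (fun ω => tre (F (fun i => ξ i ω) + ξ k ω • B k)) P :=
      integrable_cont ξ hmeas M hb (fun v => tre (F v + v k • B k))
        (continuous_tre.comp (by fun_prop))
    have hind : IndepFun (fun ω => trA (B k) (F fun i => ξ i ω))
        (fun ω => (Real.exp (m * ξ k ω) - 1) / m) P := by
      have h0 := hindep.indepFun_finset T {k} (by simpa using hk) hmeas
      have hφ : Measurable (fun v : T → ℝ => trA (B k) (H + ∑ i : T, v i • B i)) := by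
        apply Continuous.measurable
        exact (continuous_trA _).comp (by fun_prop)
      have hψ : Measurable (fun v : ({k} : Finset ι) → ℝ =>
          (Real.exp (m * v ⟨k, by simp⟩) - 1) / m) := by
        apply Continuous.measurable; fun_prop
      have := h0.comp hφ hψ
      convert! this using 1
      funext ω
      simp only [hF, Function.comp]
      congr 2
      exact (Finset.sum_coe_sort T (fun i => ξ i ω • B i)).symm
    calc ∫ ω, tre (H + ∑ i ∈ insert k T, ξ i ω • B i) ∂P
        = ∫ ω, tre (F (fun i => ξ i ω) + ξ k ω • B k) ∂P := by
          congr 1; funext ω; rw [Finset.sum_insert hk]; congr 1; simp only [hF]; abel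
      _ ≤ ∫ ω, (tre (F fun i => ξ i ω) +
            trA (B k) (F fun i => ξ i ω) * ((Real.exp (m * ξ k ω) - 1) / m)) ∂P :=
          integral_mono i5 (i1.add i3) fun ω => step_mat _ _ (hFH _) (hB k) m hm (hmB k) _
      _ = ∫ ω, tre (F fun i => ξ i ω) ∂P + (∫ ω, trA (B k) (F fun i => ξ i ω) ∂P) *
            ∫ ω, ((Real.exp (m * ξ k ω) - 1) / m) ∂P := by
          rw [integral_add i1 i3, hind.integral_fun_mul_eq_mul_integral i2.aestronglyMeasurable
            (Measurable.aestronglyMeasurable (by have := hmeas k; fun_prop))]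
      _ ≤ ∫ ω, tre (F fun i => ξ i ω) ∂P + (∫ ω, trA (B k) (F fun i => ξ i ω) ∂P) * c := by
          gcongr
          · exact integral_nonneg fun ω => trA_nonneg _ _ (hB k) (hFH _)
          · exact hc k
      _ = ∫ ω, (tre (F fun i => ξ i ω) + trA (B k) (F fun i => ξ i ω) * c) ∂P := by
          rw [integral_add i1 (i2.mul_const c), integral_mul_const]
      _ ≤ ∫ ω, tre (F (fun i => ξ i ω) + c • B k) ∂P :=
          integral_mono (i1.add (i2.mul_const c)) i4 fun ω => step_mat2 _ _ (hFH _) (hB k).1 c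
      _ = ∫ ω, tre ((H + c • B k) + ∑ i ∈ T, ξ i ω • B i) ∂P := by
          congr 1; funext ω; congr 1; simp only [hF]; abel
      _ ≤ tre ((H + c • B k) + ∑ i ∈ T, c • B i) := ih _ (herm_add_smul hH (hB k).1 c)
      _ = _ := by rw [Finset.sum_insert hk, add_assoc]

lemma tre_smul_one (c : ℝ) : tre (c • (1 : Matrix n n ℂ)) = Fintype.card n * Real.exp c := by
  have h : (c • (1 : Matrix n n ℂ)) = diagonal (fun _ => (c : ℂ)) := by
    ext i j; by_cases h : i = j <;> simp [h, Matrix.diagonal]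
  unfold tre
  rw [h, Matrix.exp_diagonal, trace_diagonal, Pi.exp_def]
  simp [← Complex.exp_eq_exp_ℂ, ← Complex.ofReal_exp]

/-- if a unit vector has large quadratic form then trace exp is large -/
lemma tre_ge (W : Matrix n n ℂ) (hW : W.IsHermitian) (v : n → ℂ) (hv : star v ⬝ᵥ v = 1) (r : ℝ)
    (hr : r ≤ (star v ⬝ᵥ (W *ᵥ v)).re) : Real.exp r ≤ tre W := by
  obtain ⟨U, x, hU1, hU2, hx, hex⟩ := exists_spm W hW
  have q : ∀ a : n → ℝ, (star v ⬝ᵥ (spm U a *ᵥ v)).re = ∑ i, a i * ‖(Uᴴ *ᵥ v) i‖ ^ 2 := by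
    intro a
    have : star v ⬝ᵥ (spm U a *ᵥ v) =
        star (Uᴴ *ᵥ v) ⬝ᵥ (diagonal (fun i => (a i : ℂ)) *ᵥ (Uᴴ *ᵥ v)) := by
      rw [spm, ← Matrix.mulVec_mulVec, ← Matrix.mulVec_mulVec, star_mulVec,
        conjTranspose_conjTranspose, ← dotProduct_mulVec]
    rw [this]
    simp only [dotProduct, mulVec_diagonal, Complex.re_sum]
    refine Finset.sum_congr rfl fun i _ => ?_
    generalize (Uᴴ *ᵥ v) = z
    have := Complex.conj_mul' (z i)
    rw [Pi.star_apply, Complex.star_def, mul_left_comm, this]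
    norm_cast
  have h1 : ∑ i, ‖(Uᴴ *ᵥ v) i‖ ^ 2 = 1 := by
    have := q (fun _ => 1)
    rw [spm_one U hU2, one_mulVec, hv] at this
    simpa using this.symm
  have h2 := q x
  rw [← hx] at h2
  have : ∃ i, r ≤ x i := by
    by_contra! hcon
    have hne : ∃ i, ‖(Uᴴ *ᵥ v) i‖ ^ 2 ≠ 0 := by
      by_contra! h; simp [h] at h1
    obtain ⟨i0, hi0⟩ := hne
    have : ∑ i, x i * ‖(Uᴴ *ᵥ v) i‖ ^ 2 < ∑ i, r * ‖(Uᴴ *ᵥ v) i‖ ^ 2 := by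
      refine Finset.sum_lt_sum (fun i _ => by have := hcon i; gcongr) ⟨i0, Finset.mem_univ _, ?_⟩
      exact mul_lt_mul_of_pos_right (hcon i0) (lt_of_le_of_ne (by positivity) hi0.symm)
    rw [← Finset.mul_sum, h1] at this
    linarith
  obtain ⟨i, hi⟩ := this
  have htr : tre W = ∑ i, Real.exp (x i) := by
    unfold tre
    rw [hex, spm, trace_mul_comm, ← Matrix.mul_assoc, hU1, Matrix.one_mul, trace_diagonal]
    simp only [Complex.re_sum, Complex.ofReal_re]
  rw [htr]
  exact (Real.exp_le_exp.2 hi).trans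
    (Finset.single_le_sum (f := fun i => Real.exp (x i)) (fun i _ => (Real.exp_pos _).le) (Finset.mem_univ i))

end prob

section blocks
open scoped ComplexOrder

lemma tre_nonneg {s : ℕ} (X : Matrix (Fin s) (Fin s) ℂ) (hX : X.IsHermitian) : 0 ≤ tre X := by
  have := trA_nonneg 1 X Matrix.PosSemidef.one hX
  simpa [trA, tre] using this

noncomputable def rowM {N s : ℕ} (Us : Matrix (Fin N) (Fin s) ℂ) (i : Fin N) :
    Matrix (Fin s) (Fin s) ℂ := vecMulVec (star (Us i)) (Us i)

noncomputable def blkM {nT Q s : ℕ} (Us : Matrix (Fin (nT * Q)) (Fin s) ℂ) (k : Fin nT) :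
    Matrix (Fin s) (Fin s) ℂ := ∑ t : Fin Q, rowM Us (blockIdx nT Q k t)

lemma blockOf_blockIdx (nT Q : ℕ) (k : Fin nT) (t : Fin Q) :
    blockOf nT Q (blockIdx nT Q k t) = k := by simp [blockOf, blockIdx]

lemma sum_blocks {M : Type*} [AddCommMonoid M] {nT Q : ℕ} (F : Fin (nT * Q) → M) :
    ∑ i, F i = ∑ k : Fin nT, ∑ t : Fin Q, F (blockIdx nT Q k t) := by
  rw [← Fintype.sum_prod_type' (fun k t => F (blockIdx nT Q k t))]
  exact (Equiv.sum_comp finProdFinEquiv F).symm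

lemma rowM_psd {N s : ℕ} (Us : Matrix (Fin N) (Fin s) ℂ) (i : Fin N) : (rowM Us i).PosSemidef :=
  posSemidef_vecMulVec_star_self _

lemma blkM_psd {nT Q s : ℕ} (Us : Matrix (Fin (nT * Q)) (Fin s) ℂ) (k : Fin nT) :
    (blkM Us k).PosSemidef := posSemidef_sum _ fun _ _ => rowM_psd _ _

lemma conj_diag {N s : ℕ} (Us : Matrix (Fin N) (Fin s) ℂ) (d : Fin N → ℝ) :
    Usᴴ * diagonal (fun i => (d i : ℂ)) * Us = ∑ i, d i • rowM Us i := by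
  ext a b
  rw [Matrix.mul_apply, Matrix.sum_apply]
  refine Finset.sum_congr rfl fun i _ => ?_
  simp [rowM, vecMulVec_apply, mul_diagonal]
  ring

lemma sum_blkM {nT Q s : ℕ} (Us : Matrix (Fin (nT * Q)) (Fin s) ℂ) (hUs : Usᴴ * Us = 1) :
    ∑ k, blkM Us k = 1 := by
  have := conj_diag Us (fun _ => 1)
  simp at this
  rw [← hUs, this, sum_blocks]
  rfl

lemma qf_row {N s : ℕ} (Us : Matrix (Fin N) (Fin s) ℂ) (i : Fin N) (v : Fin s → ℂ) :
    star v ⬝ᵥ (rowM Us i *ᵥ v) = ((‖Us i ⬝ᵥ v‖ ^ 2 : ℝ) : ℂ) := by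
  rw [rowM, vecMulVec_mulVec, dotProduct_smul]
  have : star v ⬝ᵥ star (Us i) = star (Us i ⬝ᵥ v) := by
    rw [← star_dotProduct_star, dotProduct_comm]
  rw [this]
  have := Complex.conj_mul' (Us i ⬝ᵥ v)
  simp [this]

lemma row_le {N s : ℕ} (Us : Matrix (Fin N) (Fin s) ℂ) (i : Fin N) :
    (rowNormSq Us i • (1 : Matrix (Fin s) (Fin s) ℂ) - rowM Us i).PosSemidef := by
  refine PosSemidef.of_dotProduct_mulVec_nonneg ?_ ?_
  · have := (rowM_psd Us i).1
    unfold Matrix.IsHermitian at *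
    simp [this]
  · intro v
    have hv : star v ⬝ᵥ v = ((∑ j, ‖v j‖ ^ 2 : ℝ) : ℂ) := by
      simp [dotProduct, Complex.conj_mul']
    rw [sub_mulVec, dotProduct_sub, qf_row, smul_mulVec, one_mulVec, dotProduct_smul, hv]
    have : ‖Us i ⬝ᵥ v‖ ^ 2 ≤ rowNormSq Us i * ∑ j, ‖v j‖ ^ 2 := by
      calc ‖Us i ⬝ᵥ v‖ ^ 2 ≤ (∑ j, ‖Us i j‖ * ‖v j‖) ^ 2 := by
            gcongr
            refine (norm_sum_le _ _).trans ?_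
            simp
        _ ≤ _ := Finset.sum_mul_sq_le_sq_mul_sq _ _ _
    rw [sub_nonneg, Complex.real_smul, ← Complex.ofReal_mul]
    exact_mod_cast this

lemma psd_smul_one {s : ℕ} (c : ℝ) (hc : 0 ≤ c) : (c • (1 : Matrix (Fin s) (Fin s) ℂ)).PosSemidef :=
  PosSemidef.one.smul hc

lemma blk_le_one {nT Q s : ℕ} (Us : Matrix (Fin (nT * Q)) (Fin s) ℂ) (hUs : Usᴴ * Us = 1)
    (k : Fin nT) : ((1 : Matrix (Fin s) (Fin s) ℂ) - blkM Us k).PosSemidef := by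
  rw [← sum_blkM Us hUs, ← Finset.add_sum_erase _ _ (Finset.mem_univ k), add_sub_cancel_left]
  exact posSemidef_sum _ fun _ _ => blkM_psd _ _

lemma blk_le {nT Q s : ℕ} (Us : Matrix (Fin (nT * Q)) (Fin s) ℂ) (ηU : ℝ)
    (h : ∀ i, rowNormSq Us i ≤ ηU) (k : Fin nT) :
    ((Q * ηU : ℝ) • (1 : Matrix (Fin s) (Fin s) ℂ) - blkM Us k).PosSemidef := by
  have : ((Q * ηU : ℝ) • (1 : Matrix (Fin s) (Fin s) ℂ) - blkM Us k) =
      ∑ t : Fin Q, ((ηU - rowNormSq Us (blockIdx nT Q k t)) • (1 : Matrix (Fin s) (Fin s) ℂ) +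
        (rowNormSq Us (blockIdx nT Q k t) • (1 : Matrix (Fin s) (Fin s) ℂ) -
          rowM Us (blockIdx nT Q k t))) := by
    have e : ∀ t : Fin Q, ((ηU - rowNormSq Us (blockIdx nT Q k t)) • (1 : Matrix (Fin s) (Fin s) ℂ) +
        (rowNormSq Us (blockIdx nT Q k t) • (1 : Matrix (Fin s) (Fin s) ℂ) -
          rowM Us (blockIdx nT Q k t))) = ηU • (1 : Matrix (Fin s) (Fin s) ℂ) -
          rowM Us (blockIdx nT Q k t) := by
      intro t; rw [sub_smul]; abel
    simp only [e, Finset.sum_sub_distrib, blkM, Finset.sum_const, Finset.card_univ, Fintype.card_fin]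
    rw [mul_smul, Nat.cast_smul_eq_nsmul]
  rw [this]
  exact posSemidef_sum _ fun t _ =>
    (psd_smul_one _ (sub_nonneg.2 (h _))).add (row_le _ _)

lemma sq_le_of {s : ℕ} (A : Matrix (Fin s) (Fin s) ℂ) (hA : A.PosSemidef) (m : ℝ) (hm : 0 < m)
    (h : (m • (1 : Matrix (Fin s) (Fin s) ℂ) - A).PosSemidef) : (m • A - A * A).PosSemidef := by
  have h1 := h.conjTranspose_mul_mul_same A
  have h2 := hA.conjTranspose_mul_mul_same (m • (1 : Matrix (Fin s) (Fin s) ℂ) - A)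
  have e1 : Aᴴ = A := hA.1
  have e2 : (m • (1 : Matrix (Fin s) (Fin s) ℂ) - A)ᴴ = m • (1 : Matrix (Fin s) (Fin s) ℂ) - A := h.1
  rw [e1] at h1
  rw [e2] at h2
  have h3 := (h1.add h2).smul (a := (1 / m : ℝ)) (by positivity)
  convert! h3 using 1
  simp only [mul_sub, sub_mul, Matrix.smul_mul, Matrix.mul_smul, Matrix.one_mul, Matrix.mul_one]
  have : m • A * A - A * A * A + (m • m • A - m • (A * A) - (m • (A * A) - A * A * A))
     = m • (m • A - A * A) := by
    simp only [smul_sub, Matrix.smul_mul]; abel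
  have h4 := congrArg (fun z => (1 / m : ℝ) • z) this
  simp only [smul_smul, one_div, inv_mul_cancel₀ hm.ne', one_smul, Matrix.smul_mul] at h4 ⊢
  rw [← h4]

lemma blk_sq {nT Q s : ℕ} (Us : Matrix (Fin (nT * Q)) (Fin s) ℂ) (hUs : Usᴴ * Us = 1) (ηU : ℝ)
    (h : ∀ i, rowNormSq Us i ≤ ηU) (hm : 0 < min (Q * ηU) 1) (k : Fin nT) :
    ((min (Q * ηU) 1) • blkM Us k - blkM Us k * blkM Us k).PosSemidef := by
  apply sq_le_of _ (blkM_psd Us k) _ hm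
  rcases min_choice (Q * ηU) 1 with h1 | h1
  · rw [h1]; exact blk_le Us ηU h k
  · rw [h1, one_smul]; exact blk_le_one Us hUs k

/-- deterministic implication -/
lemma det_part {nT Q s : ℕ} (hs : 0 < s) (hQ : 0 < Q)
    (Us : Matrix (Fin (nT * Q)) (Fin s) ℂ) (hUs : Usᴴ * Us = 1)
    (ηU Px μE : ℝ) (hPx : 0 < Px) (hμE : 0 < μE) (a : Fin nT → ℝ) (ha0 : ∀ k, 0 < a k)
    (ha : ∀ k, a k ≤ Q * ηU) (e : Fin (nT * Q) → ℝ) (θ r : ℝ) (hθ : 0 < θ) 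
    (p : Fin nT → ℝ) (hp : ∀ k, p k = (∑ t : Fin Q, e (blockIdx nT Q k t)) / (Px / s * a k))
    (hH : (Usᴴ * (Matrix.diagonal fun i => ((p (blockOf nT Q i) : ℝ) : ℂ)) * Us).IsHermitian)
    (i : Fin s) (hi : hH.eigenvalues i ≤ μE * (s / Px) * (1 / ηU - r)) :
    Real.exp (θ * r) ≤ tre (0 + ∑ i, (θ * ((1 - e i / μE) / a (blockOf nT Q i))) •
      blkM Us (blockOf nT Q i)) := by
  have hs' : (0 : ℝ) < s := by exact_mod_cast hs
  have hQ' : (0 : ℝ) < Q := by exact_mod_cast hQ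
  set v : Fin s → ℂ := ⇑(hH.eigenvectorBasis i) with hv
  have hv1 : star v ⬝ᵥ v = 1 := by
    have := hH.eigenvectorBasis.orthonormal.1 i
    have h2 := inner_self_eq_norm_sq_to_K (𝕜 := ℂ) (hH.eigenvectorBasis i)
    rw [this, EuclideanSpace.inner_eq_star_dotProduct, dotProduct_comm] at h2
    simpa using h2
  set q : Fin nT → ℝ := fun k => (star v ⬝ᵥ (blkM Us k *ᵥ v)).re with hq
  have hq0 : ∀ k, 0 ≤ q k := fun k =>
    (Complex.le_def.1 ((blkM_psd Us k).dotProduct_mulVec_nonneg v)).1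
  have hq1 : ∑ k, q k = 1 := by
    have : star v ⬝ᵥ ((∑ k, blkM Us k) *ᵥ v) = 1 := by rw [sum_blkM Us hUs, one_mulVec, hv1]
    rw [sum_mulVec, dotProduct_sum] at this
    have := congrArg Complex.re this
    simpa [Complex.re_sum] using this
  have hqs : ∀ c : Fin nT → ℝ, (star v ⬝ᵥ ((∑ k, c k • blkM Us k) *ᵥ v)).re = ∑ k, c k * q k := by
    intro c
    rw [sum_mulVec, dotProduct_sum, Complex.re_sum]
    refine Finset.sum_congr rfl fun k _ => ?_
    rw [smul_mulVec, dotProduct_smul]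
    simp [hq]
  have hlam : hH.eigenvalues i = ∑ k, p k * q k := by
    have hM : Usᴴ * (Matrix.diagonal fun i => ((p (blockOf nT Q i) : ℝ) : ℂ)) * Us =
        ∑ k, p k • blkM Us k := by
      rw [conj_diag Us (fun i => p (blockOf nT Q i)), sum_blocks]
      simp only [blockOf_blockIdx, ← Finset.smul_sum]
      rfl
    rw [hH.eigenvalues_eq, ← hqs]
    exact congrArg (fun M => (star v ⬝ᵥ (M *ᵥ v)).re) hM
  have hW : (0 + ∑ i, (θ * ((1 - e i / μE) / a (blockOf nT Q i))) • blkM Us (blockOf nT Q i)) =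
      ∑ k, (θ * ((Q - (∑ t : Fin Q, e (blockIdx nT Q k t)) / μE) / a k)) • blkM Us k := by
    rw [zero_add, sum_blocks]
    refine Finset.sum_congr rfl fun k _ => ?_
    simp only [blockOf_blockIdx, ← Finset.sum_smul]
    congr 1
    rw [← Finset.mul_sum, ← Finset.sum_div, Finset.sum_sub_distrib, ← Finset.sum_div]
    simp
  rw [hW]
  apply tre_ge _ _ v hv1
  · rw [hqs]
    have h1 : ∑ k, p k * q k = μE * (s / Px) * ∑ k, ((∑ t : Fin Q, e (blockIdx nT Q k t)) / μE / a k) * q k := by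
      rw [Finset.mul_sum]
      refine Finset.sum_congr rfl fun k _ => ?_
      have := (ha0 k).ne'
      rw [hp]; field_simp
    rw [hlam, h1] at hi
    have h2 := le_of_mul_le_mul_left hi (by positivity)
    have h3 : 1 / ηU ≤ ∑ k, (Q / a k) * q k := by
      calc 1 / ηU = ∑ k, (1 / ηU) * q k := by rw [← Finset.mul_sum, hq1, mul_one]
        _ ≤ _ := by
          refine Finset.sum_le_sum fun k _ => mul_le_mul_of_nonneg_right ?_ (hq0 k)
          have hη : 0 < ηU := by
            have := (ha0 k).trans_le (ha k)
            exact pos_of_mul_pos_right this hQ'.le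
          rw [div_le_div_iff₀ hη (ha0 k)]
          linarith [ha k]
    have h4 : ∑ k, (θ * ((Q - (∑ t : Fin Q, e (blockIdx nT Q k t)) / μE) / a k)) * q k =
        θ * (∑ k, (Q / a k) * q k - ∑ k, ((∑ t : Fin Q, e (blockIdx nT Q k t)) / μE / a k) * q k) := by
      rw [← Finset.sum_sub_distrib, Finset.mul_sum]
      refine Finset.sum_congr rfl fun k _ => by ring
    rw [h4]
    exact mul_le_mul_of_nonneg_left (by linarith) hθ.le
  · unfold Matrix.IsHermitian
    rw [conjTranspose_sum]
    refine Finset.sum_congr rfl fun k _ => ?_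
    have : (blkM Us k)ᴴ = blkM Us k := (blkM_psd Us k).1
    simp [conjTranspose_smul, this]

end blocks

/-- Smallest-eigenvalue bound for the energy-harvesting block-transmission model: for every
`r ∈ (0, 1/η_U]`,
`P(λ_min(Us† G Us) > μ_E·(s/P_x)·(1/η_U − r)) ≥ 1 − f_bt(μ_I, ϱ_I, r)` with
`μ_I = (1/η_L)·max{r_E − 1, 1}·min{Q·η_U, 1}` and
`ϱ_I = (ϱ_E/μ_E²)·(1/η_L²)·(1/Q)·min{Q·η_U, 1}`. -/
theorem stmt_15
    {Ω : Type} [MeasureSpace Ω] [IsProbabilityMeasure (ℙ : Measure Ω)]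
    (s nT Q : ℕ) (hs : 0 < s) (hnT : 0 < nT) (hQ : 0 < Q) (hsN : s ≤ nT * Q)
    (Us : Matrix (Fin (nT * Q)) (Fin s) ℂ) (hUs : Usᴴ * Us = 1)
    (ηL ηU : ℝ) (hηL : ηL = ⨅ i, rowNormSq Us i) (hηU : ηU = ⨆ i, rowNormSq Us i)
    (hηLpos : 0 < ηL)
    (Px : ℝ) (hPx : 0 < Px)
    (μE ϱE rE : ℝ) (hμE : 0 < μE) (hϱE : 0 < ϱE) (hrE : 1 ≤ rE)
    (E : Fin (nT * Q) → Ω → ℝ) (hEmeas : ∀ i, Measurable (E i))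
    (hindep : iIndepFun E ℙ)
    (hident : ∀ i j, IdentDistrib (E i) (E j) ℙ ℙ)
    (hmean : ∀ i, ∫ ω, E i ω = μE)
    (hvar : ∀ i, variance (E i) ℙ = ϱE)
    (hbdd : ∀ i, ∀ᵐ ω, 0 ≤ E i ω ∧ E i ω ≤ rE * μE)
    (S : Fin nT → ℝ)
    (hS : ∀ k, S k = ∑ t : Fin Q, Px / s * rowNormSq Us (blockIdx nT Q k t))
    (p : Fin nT → Ω → ℝ)
    (hp : ∀ k ω, p k ω = (∑ t : Fin Q, E (blockIdx nT Q k t) ω) / S k)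
    (G : Ω → Matrix (Fin (nT * Q)) (Fin (nT * Q)) ℂ)
    (hG : ∀ ω, G ω = Matrix.diagonal fun i => ((p (blockOf nT Q i) ω : ℝ) : ℂ))
    (hHerm : ∀ ω, (Usᴴ * G ω * Us).IsHermitian)
    (r : ℝ) (hr0 : 0 < r) (hr1 : r ≤ 1 / ηU)
    (μI ϱI : ℝ)
    (hμI : μI = 1 / ηL * max (rE - 1) 1 * min (Q * ηU) 1)
    (hϱI : ϱI = ϱE / μE ^ 2 * (1 / ηL ^ 2) * (1 / Q) * min (Q * ηU) 1) :
    ENNReal.ofReal (1 - fbt s μI ϱI r) ≤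
      ℙ {ω | μE * (s / Px) * (1 / ηU - r) < ⨅ i, (hHerm ω).eigenvalues i} := by
  classical
  have hs' : (0 : ℝ) < s := by exact_mod_cast hs
  have hQ' : (0 : ℝ) < Q := by exact_mod_cast hQ
  have hQ1 : (1 : ℝ) ≤ Q := by exact_mod_cast hQ
  have hN : 0 < nT * Q := Nat.mul_pos hnT hQ
  have hL : ∀ i, ηL ≤ rowNormSq Us i := fun i => by
    rw [hηL]; exact ciInf_le (Set.finite_range _).bddBelow i
  have hU : ∀ i, rowNormSq Us i ≤ ηU := fun i => by
    rw [hηU]; exact le_ciSup (Set.finite_range _).bddAbove i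
  have hηUpos : 0 < ηU := hηLpos.trans_le ((hL ⟨0, hN⟩).trans (hU _))
  set m : ℝ := min (Q * ηU) 1 with hm
  have hm0 : 0 < m := lt_min (by positivity) one_pos
  have hmax : 0 < max (rE - 1) 1 := lt_max_of_lt_right one_pos
  have hμI0 : 0 < μI := by rw [hμI]; positivity
  have hϱI0 : 0 < ϱI := by rw [hϱI]; positivity
  set a : Fin nT → ℝ := fun k => ∑ t : Fin Q, rowNormSq Us (blockIdx nT Q k t) with ha
  have haL : ∀ k, Q * ηL ≤ a k := fun k => by
    have := Finset.card_nsmul_le_sum (Finset.univ : Finset (Fin Q))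
      (fun t => rowNormSq Us (blockIdx nT Q k t)) ηL (fun t _ => hL _)
    simpa using this
  have haU : ∀ k, a k ≤ Q * ηU := fun k => by
    have := Finset.sum_le_card_nsmul (Finset.univ : Finset (Fin Q))
      (fun t => rowNormSq Us (blockIdx nT Q k t)) ηU (fun t _ => hU _)
    simpa using this
  have hQL : 0 < Q * ηL := by positivity
  have ha0 : ∀ k, 0 < a k := fun k => hQL.trans_le (haL k)
  have hSa : ∀ k, S k = Px / s * a k := fun k => by rw [hS, ← Finset.mul_sum]
  set A : ℝ := μI * r / ϱI with hA
  have hA0 : 0 < A := by positivity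
  set K : ℝ := Real.log (1 + A) with hK
  have hK0 : 0 < K := Real.log_pos (by linarith)
  have hexpK : Real.exp K = 1 + A := Real.exp_log (by linarith)
  set θ : ℝ := K / μI with hθ
  have hθ0 : 0 < θ := by positivity
  set ξ : Fin (nT * Q) → Ω → ℝ :=
    fun i ω => θ * ((1 - E i ω / μE) / a (blockOf nT Q i)) with hξ
  have hξm : ∀ i, Measurable (ξ i) := fun i => by
    have := hEmeas i; simp only [hξ]; fun_prop
  have hξi : iIndepFun ξ ℙ := by
    have := hindep.comp (fun i x => θ * ((1 - x / μE) / a (blockOf nT Q i)))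
      (fun i => by fun_prop)
    exact this
  have hξb : ∀ i, ∀ᵐ ω, |ξ i ω| ≤ θ * (rE / (Q * ηL)) := by
    intro i
    filter_upwards [hbdd i] with ω hω
    simp only [hξ]
    rw [abs_mul, abs_of_pos hθ0, abs_div, abs_of_pos (ha0 _)]
    have h1 : 0 ≤ E i ω / μE := div_nonneg hω.1 hμE.le
    have h2 : E i ω / μE ≤ rE := by rw [div_le_iff₀ hμE]; exact hω.2
    have h3 : |1 - E i ω / μE| ≤ rE := abs_le.2 ⟨by linarith, by linarith⟩
    have := haL (blockOf nT Q i)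
    gcongr
  -- scalar moment bound
  set c : ℝ := ϱI / μI ^ 2 * (Real.exp K - K - 1) / Q with hc
  have hE1 : ∀ i, Integrable (E i) ℙ := fun i => by
    refine Integrable.of_bound (hEmeas i).aestronglyMeasurable (rE * μE) ?_
    filter_upwards [hbdd i] with ω hω
    rw [Real.norm_eq_abs, abs_of_nonneg hω.1]; exact hω.2
  have hξint : ∀ i, Integrable (ξ i) ℙ := fun i =>
    (((integrable_const (1 : ℝ)).sub ((hE1 i).div_const μE)).div_const _).const_mul θ
  have hξ0 : ∀ i, ∫ ω, ξ i ω = 0 := fun i => by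
    simp only [hξ]
    rw [integral_const_mul, integral_div, integral_sub (integrable_const _) ((hE1 i).div_const μE),
      integral_div, hmean]
    simp [hμE.ne']
  have hξ2 : ∀ i, ∫ ω, (ξ i ω) ^ 2 = θ ^ 2 * (ϱE / μE ^ 2 / a (blockOf nT Q i) ^ 2) := fun i => by
    have hv := hvar i
    rw [variance_eq_integral (hEmeas i).aemeasurable, hmean] at hv
    rw [← hv, ← integral_div, ← integral_div, ← integral_const_mul]
    congr 1; funext ω
    have := (ha0 (blockOf nT Q i)).ne'
    simp only [hξ]
    field_simp
    ring
  have hcb : ∀ i, ∫ ω, (Real.exp (m * ξ i ω) - 1) / m ≤ c := by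
    intro i
    have hcoef : 0 ≤ (Real.exp K - K - 1) / K ^ 2 := by
      have := Real.add_one_le_exp K
      exact div_nonneg (by linarith) (by positivity)
    have hpt : ∀ᵐ ω, (Real.exp (m * ξ i ω) - 1) / m ≤
        ξ i ω + (ξ i ω) ^ 2 * (m * ((Real.exp K - K - 1) / K ^ 2)) := by
      filter_upwards [hbdd i] with ω hω
      have hle : m * ξ i ω ≤ K := by
        have h1 : ξ i ω ≤ θ * (1 / ηL * max (rE - 1) 1) := by
          simp only [hξ]
          have h1 : 0 ≤ E i ω / μE := div_nonneg hω.1 hμE.le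
          have h2 : (1 - E i ω / μE) / a (blockOf nT Q i) ≤ 1 / ηL := by
            rw [div_le_div_iff₀ (ha0 _) hηLpos]
            have := haL (blockOf nT Q i)
            nlinarith
          have h3 : 1 / ηL ≤ 1 / ηL * max (rE - 1) 1 :=
            le_mul_of_one_le_right (by positivity) (le_max_right _ _)
          exact mul_le_mul_of_nonneg_left (h2.trans h3) hθ0.le
        calc m * ξ i ω ≤ m * (θ * (1 / ηL * max (rE - 1) 1)) := by gcongr
          _ = θ * μI := by rw [hμI]; ring
          _ = K := by rw [hθ]; field_simp
      have := bennett_pt (m * ξ i ω) K hK0 hle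
      rw [div_le_iff₀ hm0]
      nlinarith
    have hint1 : Integrable (fun ω => (Real.exp (m * ξ i ω) - 1) / m) ℙ :=
      integrable_cont ξ hξm _ hξb (fun v => (Real.exp (m * v i) - 1) / m) (by fun_prop)
    have hint2 : Integrable (fun ω => (ξ i ω) ^ 2) ℙ :=
      integrable_cont ξ hξm _ hξb (fun v => (v i) ^ 2) (by fun_prop)
    calc ∫ ω, (Real.exp (m * ξ i ω) - 1) / m
        ≤ ∫ ω, (ξ i ω + (ξ i ω) ^ 2 * (m * ((Real.exp K - K - 1) / K ^ 2))) :=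
          integral_mono_ae hint1 ((hξint i).add (hint2.mul_const _)) hpt
      _ = θ ^ 2 * (ϱE / μE ^ 2 / a (blockOf nT Q i) ^ 2) * (m * ((Real.exp K - K - 1) / K ^ 2)) := by
          rw [integral_add (hξint i) (hint2.mul_const _), integral_mul_const, hξ0, hξ2, zero_add]
      _ ≤ θ ^ 2 * (ϱE / μE ^ 2 / (Q * ηL) ^ 2) * (m * ((Real.exp K - K - 1) / K ^ 2)) := by
          have := haL (blockOf nT Q i)
          gcongr
      _ = c := by
          have e : θ ^ 2 * (ϱE / μE ^ 2 / (Q * ηL) ^ 2) * m = θ ^ 2 * ϱI / Q := by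
            rw [hϱI]; field_simp
          rw [← mul_assoc, e, hc, hθ]
          field_simp
  set Z : Ω → ℝ := fun ω => tre (0 + ∑ i, ξ i ω • blkM Us (blockOf nT Q i)) with hZ
  have hZE : ∫ ω, Z ω ≤ s * Real.exp (c * Q) := by
    have := prob_step ξ hξm hξi _ hξb (fun i => blkM Us (blockOf nT Q i))
      (fun i => blkM_psd Us _) m hm0 (fun i => blk_sq Us hUs ηU hU hm0 _) c hcb Finset.univ 0
      Matrix.isHermitian_zero
    refine this.trans (le_of_eq ?_)
    have e : (0 + ∑ i, c • blkM Us (blockOf nT Q i)) = (c * Q) • (1 : Matrix (Fin s) (Fin s) ℂ) := by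
      rw [zero_add, sum_blocks]
      simp only [blockOf_blockIdx, Finset.sum_const, Finset.card_univ, Fintype.card_fin]
      rw [← Finset.smul_sum, ← Finset.smul_sum, sum_blkM Us hUs, mul_comm, mul_smul,
        Nat.cast_smul_eq_nsmul]
    rw [e, tre_smul_one, Fintype.card_fin]
  have hZint : Integrable Z ℙ :=
    integrable_cont ξ hξm _ hξb (fun v => tre (0 + ∑ i, v i • blkM Us (blockOf nT Q i)))
      (continuous_tre.comp (by fun_prop))
  have hZmeas : Measurable Z := by
    have h1 : Continuous (fun v : Fin (nT * Q) → ℝ =>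
        tre (0 + ∑ i, v i • blkM Us (blockOf nT Q i))) := continuous_tre.comp (by fun_prop)
    exact h1.measurable.comp (measurable_pi_lambda _ hξm)
  have hZ0 : ∀ ω, 0 ≤ Z ω := by
    intro ω
    have hH0 : (0 + ∑ i, ξ i ω • blkM Us (blockOf nT Q i)).IsHermitian := by
      rw [zero_add]
      unfold Matrix.IsHermitian
      rw [conjTranspose_sum]
      refine Finset.sum_congr rfl fun k _ => ?_
      have : (blkM Us (blockOf nT Q k))ᴴ = blkM Us (blockOf nT Q k) := (blkM_psd Us _).1
      simp [conjTranspose_smul, this]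
    exact tre_nonneg _ hH0
  -- Markov
  set bad : Set Ω := {ω | Real.exp (θ * r) ≤ Z ω} with hbad
  have hbadm : MeasurableSet bad := measurableSet_le measurable_const hZmeas
  have hmk := mul_meas_ge_le_integral_of_nonneg (ae_of_all _ hZ0) hZint (Real.exp (θ * r))
  have hPbad : (ℙ : Measure Ω).real bad ≤ fbt s μI ϱI r := by
    have h1 : (ℙ : Measure Ω).real bad ≤ s * Real.exp (c * Q) / Real.exp (θ * r) := by
      rw [le_div_iff₀ (Real.exp_pos _), mul_comm]
      exact hmk.trans hZE
    have h2 : s * Real.exp (c * Q) / Real.exp (θ * r) =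
        s * Real.exp (-(ϱI / μI ^ 2) * hfun A) := by
      rw [mul_div_assoc, ← Real.exp_sub]
      congr 2
      have hθr : θ * r = ϱI / μI ^ 2 * (A * K) := by
        rw [hθ, hA]; field_simp
      rw [hθr, hc, hexpK, hfun, ← hK]
      field_simp
      ring
    rw [h2] at h1
    have h3 : 0 ≤ s * Real.exp (-(ϱI / μI ^ 2) * hfun A) := by positivity
    rw [fbt, ← hA]
    linarith
  have hsub : badᶜ ⊆ {ω | μE * (s / Px) * (1 / ηU - r) < ⨅ i, (hHerm ω).eigenvalues i} := by
    intro ω hω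
    by_contra hcon
    apply hω
    have hcon' : ⨅ i, (hHerm ω).eigenvalues i ≤ μE * (s / Px) * (1 / ηU - r) := not_lt.1 hcon
    have : Nonempty (Fin s) := ⟨⟨0, hs⟩⟩
    obtain ⟨i, hi⟩ := exists_eq_ciInf_of_finite (f := (hHerm ω).eigenvalues)
    rw [← hi] at hcon'
    have hH := hHerm ω
    have hGω := hG ω
    have gen : ∀ (M : Matrix (Fin (nT * Q)) (Fin (nT * Q)) ℂ) (h : (Usᴴ * M * Us).IsHermitian),
        M = (Matrix.diagonal fun i => ((p (blockOf nT Q i) ω : ℝ) : ℂ)) →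
        h.eigenvalues i ≤ μE * (s / Px) * (1 / ηU - r) → Real.exp (θ * r) ≤ Z ω := by
      intro M h hM hle
      subst hM
      exact det_part hs hQ Us hUs ηU Px μE hPx hμE a ha0 haU (fun i => E i ω) θ r hθ0
        (fun k => p k ω) (fun k => by rw [hp, hSa]) h i hle
    exact gen _ (hHerm ω) hGω hcon'
  refine le_trans ?_ (measure_mono hsub)
  have h5 : (ℙ : Measure Ω).real badᶜ = 1 - (ℙ : Measure Ω).real bad := probReal_compl_eq_one_sub hbadm
  have h6 : 1 - fbt s μI ϱI r ≤ (ℙ : Measure Ω).real badᶜ := by rw [h5]; linarith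
  calc ENNReal.ofReal (1 - fbt s μI ϱI r) ≤ ENNReal.ofReal ((ℙ : Measure Ω).real badᶜ) :=
        ENNReal.ofReal_le_ofReal h6
    _ = ℙ badᶜ := ofReal_measureReal
end

section
/- Under the energy-harvesting block-transmission model, define for each k = 1,…,n_T the matrix W_k = Σ_{t=1}^{Q} u_{(k−1)Q+t} u_{(k−1)Q+t}† and the random matrix Z_k = (p_k − E[p_k])·W_k. Then the spectral norm of the sum of second-moment matrices satisfies ‖Σ_{k=1}^{n_T} E[Z_k²]‖ ≤ (ϱ_E/(Q·η_L²))·(s/P_x)²·min{Q·η_U, 1}. -/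
open Matrix Finset MeasureTheory ProbabilityTheory

/-- `u_i`, the conjugate transpose of the `i`-th row of `Us`. -/
noncomputable def rowVec {N s : ℕ} (Us : Matrix (Fin N) (Fin s) ℂ) (i : Fin N) :
    Fin s → ℂ := fun a => star (Us i a)

/-- The spectral norm (the `ℓ²` operator norm) of a square complex matrix. -/
noncomputable def specNorm {n : ℕ} (M : Matrix (Fin n) (Fin n) ℂ) : ℝ :=
  ‖(Matrix.toEuclideanCLM (𝕜 := ℂ) M : EuclideanSpace ℂ (Fin n) →L[ℂ] EuclideanSpace ℂ (Fin n))‖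

theorem core16 {H : Type*} [NormedAddCommGroup H] [InnerProductSpace ℂ H] {K T : Type*}
    [Fintype K] [Fintype T] (u : K → T → H)
    (ht : ∀ x : H, ∑ k, ∑ t, ‖inner ℂ (u k t) x‖ ^ 2 = ‖x‖ ^ 2) (m : ℝ) (hm : 0 ≤ m)
    (hmk : ∀ k (x : H), ∑ t, ‖inner ℂ (u k t) x‖ ^ 2 ≤ m * ‖x‖ ^ 2)
    (v : K → ℝ) (c : ℝ) (hv : ∀ k, 0 ≤ v k) (hvc : ∀ k, v k ≤ c) (hc : 0 ≤ c)
    (F : K → H → H) (hF : ∀ k x, F k x = ∑ t, (inner ℂ (u k t) x) • u k t) (x : H) :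
    ‖∑ k, (v k : ℂ) • F k (F k x)‖ ≤ c * m * ‖x‖ := by
  have hin : ∀ k x y, inner ℂ (F k x) y
      = ∑ t, (starRingEnd ℂ) (inner ℂ (u k t) x) * inner ℂ (u k t) y := by
    intro k x y
    rw [hF, sum_inner]
    simp [inner_smul_left]
  have hsym : ∀ k x y, inner ℂ (F k x) y = inner ℂ x (F k y) := by
    intro k x y
    rw [hin, hF, inner_sum]
    refine Finset.sum_congr rfl fun t _ => ?_
    rw [inner_smul_right, inner_conj_symm, mul_comm]
  have hFn : ∀ k x, ‖F k x‖ ^ 2 ≤ m * ∑ t, ‖inner ℂ (u k t) x‖ ^ 2 := by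
    intro k x
    set A := ∑ t, ‖inner ℂ (u k t) x‖ ^ 2 with hA
    have hA0 : 0 ≤ A := by positivity
    have h1 : ‖F k x‖ ^ 2 ≤ ∑ t, ‖inner ℂ (u k t) x‖ * ‖inner ℂ (u k t) (F k x)‖ := by
      have : ‖F k x‖ ^ 2 = ‖inner ℂ (F k x) (F k x)‖ := by
        rw [inner_self_eq_norm_sq_to_K]; simp
      rw [this, hin]
      refine (norm_sum_le _ _).trans (le_of_eq ?_)
      simp only [norm_mul, RCLike.norm_conj]
    have h2 := Finset.sum_mul_sq_le_sq_mul_sq Finset.univ (fun t => ‖inner ℂ (u k t) x‖)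
      (fun t => ‖inner ℂ (u k t) (F k x)‖)
    have h3 : (‖F k x‖ ^ 2) ^ 2 ≤ A * (m * ‖F k x‖ ^ 2) := by
      refine (pow_le_pow_left₀ (by positivity) h1 2).trans (h2.trans ?_)
      exact mul_le_mul_of_nonneg_left (hmk k _) hA0
    rcases eq_or_lt_of_le (sq_nonneg ‖F k x‖) with h | h
    · rw [← h]; positivity
    · nlinarith
  have hFs : ∀ x, ∑ k, ‖F k x‖ ^ 2 ≤ m * ‖x‖ ^ 2 := by
    intro x
    rw [← ht x, Finset.mul_sum]
    exact Finset.sum_le_sum fun k _ => hFn k x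
  set y := ∑ k, (v k : ℂ) • F k (F k x) with hy
  have h1 : ‖y‖ ^ 2 ≤ c * ∑ k, ‖F k x‖ * ‖F k y‖ := by
    have : ‖y‖ ^ 2 = ‖inner ℂ y y‖ := by
      rw [inner_self_eq_norm_sq_to_K]; simp
    rw [this]
    nth_rewrite 1 [hy]
    rw [sum_inner, Finset.mul_sum]
    refine (norm_sum_le _ _).trans (Finset.sum_le_sum fun k _ => ?_)
    rw [inner_smul_left, hsym, norm_mul]
    have : ‖(starRingEnd ℂ) (v k : ℂ)‖ = v k := by simp [abs_of_nonneg (hv k)]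
    rw [this]
    exact mul_le_mul (hvc k) (norm_inner_le_norm _ _) (norm_nonneg _) hc
  have h2 := Finset.sum_mul_sq_le_sq_mul_sq Finset.univ (fun k => ‖F k x‖) (fun k => ‖F k y‖)
  have h3 : (∑ k, ‖F k x‖ * ‖F k y‖) ≤ m * ‖x‖ * ‖y‖ := by
    refine le_of_sq_le_sq (h2.trans ((mul_le_mul (hFs x) (hFs y) (by positivity)
      (by positivity)).trans (le_of_eq (by ring)))) (by positivity)
  have h4 : ‖y‖ ^ 2 ≤ c * (m * ‖x‖ * ‖y‖) := h1.trans (mul_le_mul_of_nonneg_left h3 hc)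
  rcases eq_or_lt_of_le (norm_nonneg y) with h | h
  · rw [← h]; positivity
  · nlinarith

/-- Variance bound for the matrices `Z_k = (p_k − E[p_k])·W_k`,
`W_k = Σ_{t=1}^{Q} u_{(k−1)Q+t} u_{(k−1)Q+t}†`, in the energy-harvesting block-transmission
model: `‖Σ_k E[Z_k²]‖ ≤ (ϱ_E/(Q·η_L²))·(s/P_x)²·min{Q·η_U, 1}`. -/
theorem stmt_16
    {Ω : Type} [MeasureSpace Ω] [IsProbabilityMeasure (ℙ : Measure Ω)]
    (s nT Q : ℕ) (hs : 0 < s) (hnT : 0 < nT) (hQ : 0 < Q) (hsN : s ≤ nT * Q)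
    (Us : Matrix (Fin (nT * Q)) (Fin s) ℂ) (hUs : Usᴴ * Us = 1)
    (ηL ηU : ℝ) (hηL : ηL = ⨅ i, rowNormSq Us i) (hηU : ηU = ⨆ i, rowNormSq Us i)
    (hηLpos : 0 < ηL)
    (Px : ℝ) (hPx : 0 < Px)
    (μE ϱE rE : ℝ) (hμE : 0 < μE) (hϱE : 0 < ϱE) (hrE : 1 ≤ rE)
    (E : Fin (nT * Q) → Ω → ℝ) (hEmeas : ∀ i, Measurable (E i))
    (hindep : iIndepFun E ℙ)
    (hident : ∀ i j, IdentDistrib (E i) (E j) ℙ ℙ)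
    (hmean : ∀ i, ∫ ω, E i ω = μE)
    (hvar : ∀ i, variance (E i) ℙ = ϱE)
    (hbdd : ∀ i, ∀ᵐ ω, 0 ≤ E i ω ∧ E i ω ≤ rE * μE)
    (S : Fin nT → ℝ)
    (hS : ∀ k, S k = ∑ t : Fin Q, Px / s * rowNormSq Us (blockIdx nT Q k t))
    (p : Fin nT → Ω → ℝ)
    (hp : ∀ k ω, p k ω = (∑ t : Fin Q, E (blockIdx nT Q k t) ω) / S k)
    (W : Fin nT → Matrix (Fin s) (Fin s) ℂ)
    (hW : ∀ k, W k = ∑ t : Fin Q,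
      Matrix.vecMulVec (rowVec Us (blockIdx nT Q k t)) (star (rowVec Us (blockIdx nT Q k t))))
    (Z : Fin nT → Ω → Matrix (Fin s) (Fin s) ℂ)
    (hZ : ∀ k ω, Z k ω = (((p k ω - ∫ ω', p k ω' : ℝ) : ℂ)) • W k)
    (EZ2 : Fin nT → Matrix (Fin s) (Fin s) ℂ)
    (hEZ2 : ∀ k, EZ2 k = Matrix.of fun i j => ∫ ω, (Z k ω * Z k ω) i j) :
    specNorm (∑ k, EZ2 k) ≤ ϱE / (Q * ηL ^ 2) * (s / Px) ^ 2 * min (Q * ηU) 1 := by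
  have hNne : Nonempty (Fin (nT * Q)) := ⟨⟨0, Nat.mul_pos hnT hQ⟩⟩
  have hL : ∀ i, ηL ≤ rowNormSq Us i := fun i => hηL ▸ ciInf_le (Set.finite_range _).bddBelow i
  have hU : ∀ i, rowNormSq Us i ≤ ηU := fun i => hηU ▸ le_ciSup (Set.finite_range _).bddAbove i
  have hηUpos : 0 < ηU := hηLpos.trans_le ((hL hNne.some).trans (hU _))
  have hsR : (0 : ℝ) < s := by exact_mod_cast hs
  have hQR : (0 : ℝ) < Q := by exact_mod_cast hQ
  have hSL : ∀ k, Q * (Px / s * ηL) ≤ S k := by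
    intro k
    rw [hS]
    calc Q * (Px / s * ηL) = ∑ t : Fin Q, Px / s * ηL := by simp
      _ ≤ _ := Finset.sum_le_sum fun t _ => mul_le_mul_of_nonneg_left (hL _) (by positivity)
  have hmem : ∀ i, MemLp (E i) 2 ℙ := by
    intro i
    refine MemLp.of_bound (hEmeas i).aestronglyMeasurable (rE * μE) ?_
    filter_upwards [hbdd i] with ω hω
    rw [Real.norm_eq_abs, abs_of_nonneg hω.1]
    exact hω.2
  have hinj : ∀ k, Function.Injective (blockIdx nT Q k) := by
    intro k a b h
    have := finProdFinEquiv.injective h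
    simpa using this
  have hpv : ∀ k, variance (p k) ℙ = (Q * ϱE) / (S k) ^ 2 := by
    intro k
    have h1 : p k = fun ω => (S k)⁻¹ * (∑ t : Fin Q, E (blockIdx nT Q k t)) ω := by
      funext ω
      rw [hp, Finset.sum_apply, div_eq_inv_mul]
    rw [h1, variance_const_mul, IndepFun.variance_sum]
    · simp [hvar]; ring
    · intro t _; exact hmem _
    · intro a _ b _ hab
      exact hindep.indepFun (fun h => hab (hinj k h))
  have hpm : ∀ k, AEMeasurable (p k) ℙ := by
    intro k
    have h1 : p k = fun ω => (∑ t : Fin Q, E (blockIdx nT Q k t) ω) / S k := by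
      funext ω
      rw [hp]
    rw [h1]
    exact ((Finset.measurable_sum _ fun t _ => hEmeas _).div_const _).aemeasurable
  have hE2 : ∀ k, EZ2 k = ((variance (p k) ℙ : ℝ) : ℂ) • (W k * W k) := by
    intro k
    ext i j
    rw [hEZ2, variance_eq_integral (hpm k)]
    have : ∀ ω, (Z k ω * Z k ω) i j
        = (((p k ω - ∫ ω', p k ω') ^ 2 : ℝ) : ℂ) * (W k * W k) i j := by
      intro ω
      rw [hZ]
      simp
      ring
    simp only [Matrix.of_apply, this]
    rw [integral_mul_const, integral_complex_ofReal]
    rfl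
  let u : Fin nT → Fin Q → EuclideanSpace ℂ (Fin s) :=
    fun k t => WithLp.toLp 2 (rowVec Us (blockIdx nT Q k t))
  have hui : ∀ k t (x : EuclideanSpace ℂ (Fin s)),
      inner ℂ (u k t) x = (Us *ᵥ x.ofLp) (blockIdx nT Q k t) := by
    intro k t x
    simp [u, PiLp.inner_apply, rowVec, Matrix.mulVec, dotProduct, mul_comm]
  have hun : ∀ k t, ‖u k t‖ ^ 2 = rowNormSq Us (blockIdx nT Q k t) := by
    intro k t
    simp [u, EuclideanSpace.norm_sq_eq, rowVec, rowNormSq]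
  have ht : ∀ x, ∑ k, ∑ t, ‖inner ℂ (u k t) x‖ ^ 2 = ‖x‖ ^ 2 := by
    intro x
    have e1 : ∑ k, ∑ t, ‖inner ℂ (u k t) x‖ ^ 2 = ∑ i, ‖(Us *ᵥ x.ofLp) i‖ ^ 2 := by
      simp only [hui]
      rw [← Fintype.sum_prod_type' (f := fun k t => ‖(Us *ᵥ x.ofLp) (blockIdx nT Q k t)‖ ^ 2)]
      exact Equiv.sum_comp finProdFinEquiv (fun i => ‖(Us *ᵥ x.ofLp) i‖ ^ 2)
    rw [e1, EuclideanSpace.norm_sq_eq]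
    have e2 : star (Us *ᵥ x.ofLp) ⬝ᵥ (Us *ᵥ x.ofLp) = star x.ofLp ⬝ᵥ x.ofLp := by
      rw [Matrix.star_mulVec, Matrix.dotProduct_mulVec, Matrix.vecMul_vecMul, hUs,
        Matrix.vecMul_one]
    have e3 : ∀ {n : ℕ} (w : Fin n → ℂ), star w ⬝ᵥ w = ((∑ i, ‖w i‖ ^ 2 : ℝ) : ℂ) := by
      intro n w
      simp [dotProduct, Complex.conj_mul']
    rw [e3, e3] at e2
    exact_mod_cast e2
  have hmk : ∀ k x, ∑ t, ‖inner ℂ (u k t) x‖ ^ 2 ≤ min (Q * ηU) 1 * ‖x‖ ^ 2 := by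
    intro k x
    rw [min_mul_of_nonneg _ _ (by positivity), le_min_iff]
    constructor
    · calc ∑ t, ‖inner ℂ (u k t) x‖ ^ 2 ≤ ∑ t : Fin Q, ηU * ‖x‖ ^ 2 := by
            refine Finset.sum_le_sum fun t _ => ?_
            calc ‖inner ℂ (u k t) x‖ ^ 2 ≤ (‖u k t‖ * ‖x‖) ^ 2 :=
                  pow_le_pow_left₀ (norm_nonneg _) (norm_inner_le_norm _ _) 2
              _ = rowNormSq Us (blockIdx nT Q k t) * ‖x‖ ^ 2 := by rw [mul_pow, hun]
              _ ≤ _ := mul_le_mul_of_nonneg_right (hU _) (by positivity)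
        _ = _ := by simp; ring
    · rw [one_mul, ← ht x]
      exact Finset.single_le_sum (f := fun k => ∑ t, ‖inner ℂ (u k t) x‖ ^ 2)
        (fun k _ => by positivity) (Finset.mem_univ k)
  have hF : ∀ k (x : EuclideanSpace ℂ (Fin s)), Matrix.toEuclideanCLM (𝕜 := ℂ) (W k) x
      = ∑ t, (inner ℂ (u k t) x) • u k t := by
    intro k x
    rw [hW, map_sum, _root_.sum_apply]
    refine Finset.sum_congr rfl fun t _ => ?_
    rw [hui]
    ext a
    simp [u, Matrix.ofLp_toEuclideanCLM, Matrix.vecMulVec_mulVec, rowVec, Matrix.mulVec,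
      dotProduct, Matrix.vecMulVec_apply, Finset.mul_sum, Finset.sum_mul]
    refine Finset.sum_congr rfl fun b _ => ?_
    ring
  have hc : ∀ k, variance (p k) ℙ ≤ ϱE / (Q * ηL ^ 2) * (s / Px) ^ 2 := by
    intro k
    rw [hpv]
    have h0 : 0 < Q * (Px / s * ηL) := by positivity
    calc Q * ϱE / (S k) ^ 2 ≤ Q * ϱE / (Q * (Px / s * ηL)) ^ 2 := by
          have := hSL k
          gcongr
      _ = _ := by field_simp
  unfold specNorm
  refine ContinuousLinearMap.opNorm_le_bound _ (by positivity) fun x => ?_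
  have := core16 u ht (min (Q * ηU) 1) (by positivity) hmk (fun k => variance (p k) ℙ)
    (ϱE / (Q * ηL ^ 2) * (s / Px) ^ 2) (fun k => variance_nonneg _ _) hc (by positivity)
    (fun k x => Matrix.toEuclideanCLM (𝕜 := ℂ) (W k) x) hF x
  have e : Matrix.toEuclideanCLM (𝕜 := ℂ) (∑ k, EZ2 k) x = ∑ k, ((variance (p k) ℙ : ℝ) : ℂ) •
      Matrix.toEuclideanCLM (𝕜 := ℂ) (W k) (Matrix.toEuclideanCLM (𝕜 := ℂ) (W k) x) := by
    rw [map_sum, _root_.sum_apply]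
    refine Finset.sum_congr rfl fun k _ => ?_
    rw [hE2, map_smul, map_mul]
    rfl
  rw [e]
  exact this
end
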